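/- arXiv:1205.6770 — 3 statements merged into one kernel-verified Lean document; each statement's English description precedes it below -/
import Mathlib

section
/- Let (R,m) be a Noetherian local ring, M a finite R-module with dim M = d ≥ 1, and J an ideal generated by a system of parameters for M. Then e₁(J,M) ≤ 0. -/
open IsLocalRing Filter Function CategoryTheory

universe u

section Defs

variable (R : Type u) [CommRing R]

/-- The length of a module, as the Krull dimension of its lattice of submodules. -/
noncomputable def mlen (M : Type u) [AddCommGroup M] [Module R M] : WithBot ℕ∞ :=
  Order.krullDim (Submodule R M)

/-- The (Krull) dimension of a module. -/
noncomputable def mdim (M : Type u) [AddCommGroup M] [Module R M] : WithBot ℕ∞ :=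
  ringKrullDim (R ⧸ Module.annihilator R M)

/-- The depth of `M` with respect to an ideal `I`: the supremum of the lengths of
`M`-regular sequences consisting of elements of `I`. -/
noncomputable def idepth (I : Ideal R) (M : Type u) [AddCommGroup M] [Module R M] : ℕ∞ :=
  sSup {n : ℕ∞ | ∃ rs : List R, (rs.length : ℕ∞) = n ∧ (∀ r ∈ rs, r ∈ I) ∧
    RingTheory.Sequence.IsRegular M rs}

/-- The depth of a module over a local ring. -/
noncomputable def mdepth [IsLocalRing R] (M : Type u) [AddCommGroup M] [Module R M] : ℕ∞ :=
  idepth R (maximalIdeal R) M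

/-- A Cohen–Macaulay module over a local ring: depth = dimension. -/
def IsCMMod [IsLocalRing R] (M : Type u) [AddCommGroup M] [Module R M] : Prop :=
  (mdepth R M : WithBot ℕ∞) = mdim R M

/-- A Cohen–Macaulay local ring. -/
def IsCMRing [IsLocalRing R] : Prop := (mdepth R R : WithBot ℕ∞) = ringKrullDim R

/-- A maximal Cohen–Macaulay module: finite with depth = dim R. -/
def IsMCMMod [IsLocalRing R] (M : Type u) [AddCommGroup M] [Module R M] : Prop :=
  Module.Finite R M ∧ (mdepth R M : WithBot ℕ∞) = ringKrullDim R

/-- `H⁰_m(M)`: the submodule of elements killed by a power of the maximal ideal. -/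
def H0 [IsLocalRing R] (M : Type u) [AddCommGroup M] [Module R M] : Submodule R M :=
  ⨆ n : ℕ, Submodule.torsionBySet R M ((maximalIdeal R ^ n : Ideal R) : Set R)

/-- The `i`-th local cohomology of `M` with support in the maximal ideal. -/
noncomputable def lcoh [IsLocalRing R] (i : ℕ) (M : Type u) [AddCommGroup M] [Module R M] :
    ModuleCat.{u} R :=
  (localCohomology (maximalIdeal R) i).obj (ModuleCat.of R M)

/-- The value at `n` of the Hilbert–Samuel polynomial in dimension `d` with coefficients
`e 0, …, e d`:  `∑ (-1)^i eᵢ C(n+d-1-i, d-i)`. -/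
def hsPoly (d : ℕ) (e : ℕ → ℤ) (n : ℕ) : ℤ :=
  ∑ i ∈ Finset.range (d + 1), (-1 : ℤ) ^ i * e i * ((n + d - 1 - i).choose (d - i) : ℤ)

/-- `I` is a parameter ideal for `M` of dimension `d`: generated by `d` elements with
`M/IM` of finite length. -/
def IsParameterIdeal [IsLocalRing R] (I : Ideal R) (d : ℕ) (M : Type u) [AddCommGroup M]
    [Module R M] : Prop :=
  (∃ a : Fin d → R, I = Ideal.span (Set.range a)) ∧ mlen R (M ⧸ (I • (⊤ : Submodule R M))) < ⊤

/-- `ℓ` records the Hilbert–Samuel function of `I` on `M`:  `ℓ n = λ(M/IⁿM)`. -/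
def IsHilbSeq (I : Ideal R) (M : Type u) [AddCommGroup M] [Module R M] (ℓ : ℕ → ℕ) : Prop :=
  ∀ n : ℕ, mlen R (M ⧸ (I ^ n • (⊤ : Submodule R M))) = ((ℓ n : ℕ∞) : WithBot ℕ∞)

/-- `e 0, …, e d` are the Hilbert coefficients of `I` on `M`: the Hilbert–Samuel function
eventually agrees with the Hilbert–Samuel polynomial with these coefficients. -/
def HasHilbCoeffs (I : Ideal R) (M : Type u) [AddCommGroup M] [Module R M] (d : ℕ)
    (e : ℕ → ℤ) : Prop :=
  ∃ ℓ : ℕ → ℕ, IsHilbSeq R I M ℓ ∧ ∀ᶠ n in atTop, (ℓ n : ℤ) = hsPoly d e n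

/-- A local ring is unmixed if every associated prime of its completion has
dimension equal to `dim R`. -/
def Unmixed [IsLocalRing R] : Prop :=
  ∀ p ∈ associatedPrimes (AdicCompletion (maximalIdeal R) R)
      (AdicCompletion (maximalIdeal R) R),
    ringKrullDim ((AdicCompletion (maximalIdeal R) R) ⧸ p) = ringKrullDim R

/-- The height of an ideal: the infimum of the heights of the primes containing it. -/
noncomputable def idealHeight (I : Ideal R) : ℕ∞ :=
  ⨅ p ∈ {p : PrimeSpectrum R | I ≤ p.asIdeal}, Order.height p

/-- A regular local ring: the maximal ideal is generated by `dim R` elements. -/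
def IsRegularLocal [IsLocalRing R] : Prop :=
  ∃ s : Finset R, Ideal.span (s : Set R) = maximalIdeal R ∧
    ((s.card : ℕ∞) : WithBot ℕ∞) = ringKrullDim R

end Defs

section Helpers

theorem aux_tend (m k : ℕ) :
    Tendsto (fun n : ℕ => ((n + m).choose k : ℝ) / (n : ℝ) ^ k) atTop (nhds (1 / (k.factorial : ℝ))) := by
  have h1 := isEquivalent_choose k
  have h2 : Tendsto (fun n : ℕ => (n.choose k : ℝ) / ((n : ℝ) ^ k)) atTop
      (nhds (1 / (k.factorial : ℝ))) := by
    have h3 := (Asymptotics.isEquivalent_iff_tendsto_one (by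
      filter_upwards [eventually_gt_atTop 0] with n hn
      have : (0 : ℝ) < n := by exact_mod_cast hn
      have := Nat.factorial_pos k
      positivity)).1 h1
    have h4 := h3.mul_const (1 / (k.factorial : ℝ))
    rw [one_mul] at h4
    refine h4.congr' ?_
    filter_upwards [eventually_gt_atTop 0] with n hn
    have : (0 : ℝ) < n := by exact_mod_cast hn
    have : (0 : ℝ) < k.factorial := by exact_mod_cast Nat.factorial_pos k
    simp only [Pi.div_apply]
    field_simp
  have h5 : Tendsto (fun n : ℕ => (((n + m : ℕ) : ℝ) / n) ^ k) atTop (nhds 1) := by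
    have : Tendsto (fun n : ℕ => (1 + (m : ℝ) / n)) atTop (nhds (1 + 0)) :=
      tendsto_const_nhds.add (tendsto_const_div_atTop_nhds_zero_nat _)
    have h6 := this.pow k
    simp only [add_zero, one_pow] at h6
    refine h6.congr' ?_
    filter_upwards [eventually_gt_atTop 0] with n hn
    have : (0 : ℝ) < n := by exact_mod_cast hn
    congr 1
    push_cast
    field_simp
  have h7 := ((tendsto_add_atTop_iff_nat m).2 h2).mul h5
  rw [mul_one] at h7
  refine h7.congr' ?_
  filter_upwards [eventually_gt_atTop 0] with n hn
  have : (0 : ℝ) < n := by exact_mod_cast hn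
  have : (0 : ℝ) < ((n + m : ℕ) : ℝ) := by positivity
  rw [div_pow]
  field_simp

theorem aux_tend_zero (m k l : ℕ) (h : k < l) :
    Tendsto (fun n : ℕ => ((n + m).choose k : ℝ) / (n : ℝ) ^ l) atTop (nhds 0) := by
  have h1 := (aux_tend m k).mul (tendsto_const_div_pow 1 (l - k) (by omega))
  rw [mul_zero] at h1
  refine h1.congr' ?_
  filter_upwards [eventually_gt_atTop 0] with n hn
  have : (0 : ℝ) < n := by exact_mod_cast hn
  have h3 : (n : ℝ) ^ l = n ^ k * n ^ (l - k) := by rw [← pow_add]; congr 1; omega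
  rw [h3]
  field_simp

theorem aux_tend_zero' (t i l : ℕ) (h : t + 1 - i < l) (hi : i ≤ t + 1) :
    Tendsto (fun n : ℕ => ((n + (t + 1) - 1 - i).choose (t + 1 - i) : ℝ) / (n : ℝ) ^ l)
      atTop (nhds 0) := by
  rcases Nat.lt_or_ge t i with h1 | h1
  · have : i = t + 1 := by omega
    subst this
    have h2 := aux_tend_zero 0 0 l (by omega)
    simpa using h2
  · have h2 := aux_tend_zero (t - i) (t + 1 - i) l h
    have h3 : ∀ n, n + (t + 1) - 1 - i = n + (t - i) := by omega
    simpa only [h3] using h2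

theorem aux_final (t : ℕ) (e : ℕ → ℤ) (c s : ℕ)
    (h : ∀ᶠ n : ℕ in atTop, (c : ℤ) * ((n + t).choose (t + 1) : ℤ) ≤ hsPoly (t + 1) e n ∧
      hsPoly (t + 1) e n ≤ (c : ℤ) * ((n + t).choose (t + 1) : ℤ) + s * ((n + t).choose t : ℤ)) :
    e 1 ≤ 0 := by
  -- rest of the polynomial
  set r : ℕ → ℝ := fun n => ∑ i ∈ Finset.range t, (-1 : ℝ) ^ (i + 2) * e (i + 2) *
    ((n + (t + 1) - 1 - (i + 2)).choose (t + 1 - (i + 2)) : ℝ) with hr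
  have hpoly : ∀ n, ((hsPoly (t + 1) e n : ℤ) : ℝ) =
      r n - e 1 * ((n + (t + 1) - 1 - 1).choose t : ℝ) + e 0 * ((n + t).choose (t + 1) : ℝ) := by
    intro n
    unfold hsPoly
    rw [Finset.sum_range_succ', Finset.sum_range_succ']
    push_cast
    simp only [hr]
    simp
    ring
  have hrl : ∀ l, t ≤ l → 1 ≤ l → Tendsto (fun n : ℕ => r n / (n : ℝ) ^ l) atTop (nhds 0) := by
    intro l hl hl1
    have : Tendsto (fun n : ℕ => ∑ i ∈ Finset.range t, (-1 : ℝ) ^ (i + 2) * e (i + 2) *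
      (((n + (t + 1) - 1 - (i + 2)).choose (t + 1 - (i + 2)) : ℝ) / (n : ℝ) ^ l)) atTop
        (nhds (∑ i ∈ Finset.range t, (-1 : ℝ) ^ (i + 2) * e (i + 2) * 0)) := by
      refine tendsto_finsetSum _ fun i hi => ?_
      rw [Finset.mem_range] at hi
      exact (aux_tend_zero' t (i + 2) l (by omega) (by omega)).const_mul _
    simp only [mul_zero, Finset.sum_const_zero] at this
    refine this.congr fun n => ?_
    simp only [hr, Finset.sum_div, mul_div_assoc]
  have hrt : Tendsto (fun n : ℕ => r n / (n : ℝ) ^ t) atTop (nhds 0) := by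
    rcases Nat.eq_zero_or_pos t with h0 | h0
    · subst h0
      simp [hr]
    · exact hrl t le_rfl h0
  have h1t : Tendsto (fun n : ℕ => ((n + (t + 1) - 1 - 1).choose t : ℝ) / (n : ℝ) ^ t) atTop
      (nhds (1 / (t.factorial : ℝ))) := by
    rcases Nat.eq_zero_or_pos t with h0 | h0
    · subst h0
      simp
    · have h2 := aux_tend (t - 1) t
      have h3 : ∀ n, n + (t + 1) - 1 - 1 = n + (t - 1) := by omega
      simpa only [h3] using h2
  have h1t' : Tendsto (fun n : ℕ => ((n + (t + 1) - 1 - 1).choose t : ℝ) / (n : ℝ) ^ (t + 1)) atTop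
      (nhds 0) := aux_tend_zero' t 1 (t + 1) (by omega) (by omega)
  have h0t := aux_tend t (t + 1)
  have hst := aux_tend_zero t t (t + 1) (by omega)
  have hfac : (0 : ℝ) < 1 / ((t + 1).factorial : ℝ) := by
    have := Nat.factorial_pos (t + 1)
    positivity
  have hfac' : (0 : ℝ) < 1 / (t.factorial : ℝ) := by
    have := Nat.factorial_pos t
    positivity
  have hR : ∀ᶠ n : ℕ in atTop, (c : ℝ) * ((n + t).choose (t + 1) : ℝ) ≤
      r n - e 1 * ((n + (t + 1) - 1 - 1).choose t : ℝ) + e 0 * ((n + t).choose (t + 1) : ℝ) ∧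
      r n - e 1 * ((n + (t + 1) - 1 - 1).choose t : ℝ) + e 0 * ((n + t).choose (t + 1) : ℝ)
      ≤ (c : ℝ) * ((n + t).choose (t + 1) : ℝ) + s * ((n + t).choose t : ℝ) := by
    filter_upwards [h] with n hn
    rw [← hpoly]
    exact ⟨by exact_mod_cast hn.1, by exact_mod_cast hn.2⟩
  have hP : Tendsto (fun n : ℕ => (r n - e 1 * ((n + (t + 1) - 1 - 1).choose t : ℝ) +
      e 0 * ((n + t).choose (t + 1) : ℝ)) / (n : ℝ) ^ (t + 1)) atTop
      (nhds (e 0 * (1 / ((t + 1).factorial : ℝ)))) := by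
    have := ((hrl (t + 1) (by omega) (by omega)).sub (h1t'.const_mul (e 1 : ℝ))).add
      (h0t.const_mul (e 0 : ℝ))
    simp only [mul_zero, sub_zero, zero_add] at this
    refine this.congr fun n => ?_
    ring
  have hL := h0t.const_mul (c : ℝ)
  have hU := (h0t.const_mul (c : ℝ)).add (hst.const_mul (s : ℝ))
  rw [mul_zero, add_zero] at hU
  have hpos : ∀ᶠ n : ℕ in atTop, (0 : ℝ) < n := by
    filter_upwards [eventually_gt_atTop 0] with n hn
    exact_mod_cast hn
  have le1 := le_of_tendsto_of_tendsto hL hP (by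
    filter_upwards [hR, hpos] with n hn hn0
    rw [← mul_div_assoc]
    exact div_le_div_of_nonneg_right hn.1 (by positivity))
  have le2 := le_of_tendsto_of_tendsto hP hU (by
    filter_upwards [hR, hpos] with n hn hn0
    rw [← mul_div_assoc, ← mul_div_assoc, ← add_div]
    exact div_le_div_of_nonneg_right hn.2 (by positivity))
  have hc : (c : ℝ) = e 0 := le_antisymm (le_of_mul_le_mul_right le1 hfac)
    (le_of_mul_le_mul_right le2 hfac)
  have hQ := hrt.sub (h1t.const_mul (e 1 : ℝ))
  have := ge_of_tendsto hQ (b := 0) (by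
    filter_upwards [hR, hpos] with n hn hn0
    have h1 := hn.1
    rw [hc] at h1
    rw [← mul_div_assoc, ← sub_div]
    apply div_nonneg _ (by positivity)
    linarith)
  have h3 : (e 1 : ℝ) * (1 / (t.factorial : ℝ)) ≤ 0 := by linarith
  have : (e 1 : ℝ) ≤ 0 := by
    by_contra hcon
    push Not at hcon
    have := mul_pos hcon hfac'
    linarith
  exact_mod_cast this

open MvPolynomial in
theorem aux_length (R : Type u) [CommRing R] [IsLocalRing R] (t i : ℕ) :
    Module.length R (homogeneousSubmodule (Fin (t + 1)) (ResidueField R) i) =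
      (((t + i).choose t : ℕ) : ℕ∞) := by
  have h1 : Module.length R (homogeneousSubmodule (Fin (t + 1)) (ResidueField R) i) =
      Module.length (ResidueField R) (homogeneousSubmodule (Fin (t + 1)) (ResidueField R) i) :=
    Module.length_eq_of_surjective (IsLocalRing.residue_surjective)
  rw [h1, homogeneousSubmodule_eq_finsupp_supported,
    (AddMonoidAlgebra.supportedEquivFinsupp _).length_eq, Module.length_finsupp,
    Module.length_eq_one, mul_one]
  have h2 : {d : Fin (t + 1) →₀ ℕ | d.degree = i} =
      ((Finset.univ : Finset (Fin (t + 1))).finsuppAntidiag i : Set (Fin (t + 1) →₀ ℕ)) := by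
    ext f
    simp [Finsupp.degree_eq_sum]
  rw [h2]
  have h3 := Finset.card_finsuppAntidiag_nat_eq_choose (s := (Finset.univ : Finset (Fin (t + 1)))) i
  simp only [Finset.card_univ, Fintype.card_fin] at h3
  have h4 : t + 1 + i - 1 = t + i := by omega
  rw [h4, ← Nat.choose_symm_add] at h3
  rw [← h3]
  exact Set.encard_coe_eq_coe_finsetCard _

section Cover

open MvPolynomial

variable {R M : Type u} [CommRing R] [IsLocalRing R] [AddCommGroup M] [Module R M]

theorem aux_aeval_mem {d : ℕ} (a : Fin d → R) (i : ℕ) (F : MvPolynomial (Fin d) R)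
    (hF : F.IsHomogeneous i) : aeval a F ∈ (Ideal.span (Set.range a)) ^ i := by
  rw [Ideal.span_pow_eq_map_homogeneousSubmodule]
  exact ⟨F, hF, rfl⟩

theorem aux_exists_phi {d : ℕ} (a : Fin d → R) (N : Submodule R M) (x : M)
    (hx : ∀ r ∈ maximalIdeal R, r • x ∈ N) (i : ℕ) :
    ∃ φ : homogeneousSubmodule (Fin d) (ResidueField R) i →ₗ[R]
        M ⧸ ((Ideal.span (Set.range a)) ^ i • N),
      ∀ (F : MvPolynomial (Fin d) R) (hF : F.IsHomogeneous i),
        φ ⟨map (IsLocalRing.residue R) F, hF.map _⟩ =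
          Submodule.Quotient.mk (aeval a F • x) := by
  let π : homogeneousSubmodule (Fin d) R i →ₗ[R]
      homogeneousSubmodule (Fin d) (ResidueField R) i :=
    { toFun := fun F => ⟨map (IsLocalRing.residue R) F.1, IsHomogeneous.map F.2 _⟩
      map_add' := fun F G => by ext1; simp
      map_smul' := fun r F => by
        ext1
        simp [Algebra.smul_def] }
  let ψ : homogeneousSubmodule (Fin d) R i →ₗ[R] M ⧸ ((Ideal.span (Set.range a)) ^ i • N) :=
    (Submodule.mkQ _) ∘ₗ (LinearMap.toSpanSingleton R M x) ∘ₗ (aeval a).toLinearMap ∘ₗ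
      (Submodule.subtype _)
  have hπ : Function.Surjective π := by
    rintro ⟨f, hf⟩
    obtain ⟨F, rfl⟩ := map_surjective (IsLocalRing.residue R) IsLocalRing.residue_surjective f
    refine ⟨⟨homogeneousComponent i F, homogeneousComponent_isHomogeneous i F⟩, ?_⟩
    ext1
    change map (IsLocalRing.residue R) (homogeneousComponent i F) = _
    ext m
    rw [coeff_map, coeff_homogeneousComponent]
    split_ifs with h
    · rw [coeff_map]
    · rw [map_zero]
      by_contra hne
      exact h (by
        have := hf (Ne.symm hne)
        rw [← this, Finsupp.degree_eq_weight_one]; rfl)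
  have hker : LinearMap.ker π ≤ LinearMap.ker ψ := by
    rintro ⟨F, hF⟩ h
    have h0 : map (IsLocalRing.residue R) F = 0 := congrArg Subtype.val h
    have hc : ∀ m, coeff m F ∈ maximalIdeal R := by
      intro m
      rw [← IsLocalRing.residue_eq_zero_iff, ← coeff_map, h0, coeff_zero]
    change Submodule.Quotient.mk (aeval a F • x) = 0
    rw [Submodule.Quotient.mk_eq_zero]
    rw [F.as_sum, map_sum, Finset.sum_smul]
    refine Submodule.sum_mem _ fun m hm => ?_
    have h1 : monomial m (coeff m F) = coeff m F • monomial m (1 : R) := by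
      rw [smul_monomial, smul_eq_mul, mul_one]
    rw [h1, map_smul, smul_eq_mul, mul_comm, mul_smul]
    refine Submodule.smul_mem_smul (aux_aeval_mem a i _ ?_) (hx _ (hc m))
    apply isHomogeneous_monomial
    rw [mem_support_iff] at hm
    have := hF hm
    rw [← this, Finsupp.degree_eq_weight_one]; rfl
  refine ⟨((LinearMap.ker π).liftQ ψ hker) ∘ₗ (π.quotKerEquivOfSurjective hπ).symm.toLinearMap, ?_⟩
  intro F hF
  have : (⟨map (IsLocalRing.residue R) F, hF.map _⟩ :
    homogeneousSubmodule (Fin d) (ResidueField R) i) = π ⟨F, hF⟩ := rfl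
  rw [this]
  simp only [LinearMap.comp_apply, LinearEquiv.coe_coe]
  rw [show π ⟨F, hF⟩ = π.quotKerEquivOfSurjective hπ (Submodule.Quotient.mk ⟨F, hF⟩) from rfl,
    LinearEquiv.symm_apply_apply]
  rfl

theorem aux_lift {d : ℕ} (i : ℕ) (f : homogeneousSubmodule (Fin d) (ResidueField R) i) :
    ∃ (F : MvPolynomial (Fin d) R) (hF : F.IsHomogeneous i),
      f = ⟨map (IsLocalRing.residue R) F, hF.map _⟩ := by
  obtain ⟨f, hf⟩ := f
  obtain ⟨F, rfl⟩ := map_surjective (IsLocalRing.residue R) IsLocalRing.residue_surjective f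
  refine ⟨homogeneousComponent i F, homogeneousComponent_isHomogeneous i F, ?_⟩
  ext1
  ext m
  change coeff m (map (IsLocalRing.residue R) F) = coeff m (map (IsLocalRing.residue R) (homogeneousComponent i F))
  rw [coeff_map, coeff_map, coeff_homogeneousComponent]
  split_ifs with h
  · rfl
  · rw [map_zero, ← coeff_map]
    by_contra hne
    exact h (by
      have := hf hne
      rw [← this, Finsupp.degree_eq_weight_one]; rfl)

theorem aux_cover (t : ℕ) (a : Fin (t + 1) → R) (N N' : Submodule R M) (hN : N ⋖ N') :
    ∃ (c s : ℕ) (h : ℕ → ℕ),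
      (∀ i, Module.length R (M ⧸ ((Ideal.span (Set.range a)) ^ i • N)) =
        h i + Module.length R (M ⧸ ((Ideal.span (Set.range a)) ^ i • N'))) ∧
      (∀ n, c * ∑ i ∈ Finset.range n, (t + i).choose t ≤ ∑ i ∈ Finset.range n, h i ∧
        ∑ i ∈ Finset.range n, h i ≤
          c * ∑ i ∈ Finset.range n, (t + i).choose t + s * (t + n).choose t) := by
  set J := Ideal.span (Set.range a) with hJ
  obtain ⟨x, hxN', hxN⟩ := SetLike.exists_of_lt hN.lt
  have hspan : ∀ y ∈ N', y ∉ N → N ⊔ Submodule.span R {y} = N' := by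
    intro y hy hyN
    refine (hN.eq_or_eq le_sup_left (sup_le hN.le ?_)).resolve_left ?_
    · rwa [Submodule.span_singleton_le_iff_mem]
    · intro h
      apply hyN
      rw [← h]
      exact Submodule.mem_sup_right (Submodule.mem_span_singleton_self y)
  have hx : ∀ r ∈ maximalIdeal R, r • x ∈ N := by
    intro r hr
    by_contra hcon
    have h1 := hspan _ (N'.smul_mem r hxN') hcon
    rw [← h1, Submodule.mem_sup] at hxN'
    obtain ⟨y, hy, z, hz, hyz⟩ := hxN'
    obtain ⟨b, rfl⟩ := Submodule.mem_span_singleton.1 hz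
    have h2 : (1 - b * r) • x = y := by
      rw [sub_smul, one_smul, mul_smul, sub_eq_iff_eq_add, hyz]
    have h3 : IsUnit (1 - b * r) := by
      by_contra hnu
      have h4 : (1 - b * r) ∈ maximalIdeal R := (mem_maximalIdeal _).2 hnu
      have h5 := (maximalIdeal R).add_mem h4 ((maximalIdeal R).mul_mem_left b hr)
      rw [sub_add_cancel] at h5
      exact (Ideal.ne_top_iff_one _).1 (maximalIdeal.isMaximal R).ne_top h5
    apply hxN
    rw [← h2] at hy
    obtain ⟨u, hu⟩ := h3
    rw [← hu] at hy
    have := N.smul_mem (↑u⁻¹ : R) hy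
    rwa [← mul_smul, Units.inv_mul, one_smul] at this
  choose φ hφ using fun i => aux_exists_phi a N x hx i
  have hle : ∀ i, J ^ i • N ≤ J ^ i • N' := fun i => Submodule.smul_mono le_rfl hN.le
  have hrange : ∀ i, LinearMap.range (φ i) = LinearMap.ker (Submodule.factor (hle i)) := by
    intro i
    apply le_antisymm
    · rintro _ ⟨f, rfl⟩
      obtain ⟨F, hF, rfl⟩ := aux_lift i f
      rw [hφ i F hF, LinearMap.mem_ker]
      change Submodule.Quotient.mk _ = _
      rw [Submodule.Quotient.mk_eq_zero]
      exact Submodule.smul_mem_smul (aux_aeval_mem a i F hF) hxN'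
    · intro y hy
      obtain ⟨y, rfl⟩ := Submodule.Quotient.mk_surjective _ y
      rw [LinearMap.mem_ker] at hy
      change Submodule.Quotient.mk _ = _ at hy
      rw [Submodule.Quotient.mk_eq_zero, ← hspan x hxN' hxN, Submodule.smul_sup,
        Submodule.mem_sup] at hy
      obtain ⟨y1, hy1, y2, hy2, rfl⟩ := hy
      rw [Submodule.mem_smul_span_singleton] at hy2
      obtain ⟨r, hr, rfl⟩ := hy2
      rw [hJ, Ideal.span_pow_eq_map_homogeneousSubmodule] at hr
      obtain ⟨F, hF, rfl⟩ := hr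
      refine ⟨_, (hφ i F hF).trans ?_⟩
      rw [Submodule.Quotient.eq]
      have : aeval a F • x - (y1 + (aeval a).toLinearMap F • x) = - y1 := by simp
      rw [this]
      exact Submodule.neg_mem _ hy1
  have hlen1 : ∀ i, Module.length R (M ⧸ (J ^ i • N)) =
      Module.length R (LinearMap.range (φ i)) + Module.length R (M ⧸ (J ^ i • N')) := by
    intro i
    rw [hrange i]
    exact Module.length_eq_add_of_exact (LinearMap.ker (Submodule.factor (hle i))).subtype _
      (Submodule.subtype_injective _) (Submodule.factor_surjective (hle i))
      (LinearMap.exact_subtype_ker_map _)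
  have hlen2 : ∀ i, (((t + i).choose t : ℕ) : ℕ∞) = Module.length R (LinearMap.ker (φ i)) +
      Module.length R (LinearMap.range (φ i)) := by
    intro i
    rw [← aux_length R t i]
    exact Module.length_eq_add_of_exact (LinearMap.ker (φ i)).subtype (φ i).rangeRestrict
      (Submodule.subtype_injective _) (LinearMap.surjective_rangeRestrict _)
      (by rw [LinearMap.exact_iff, LinearMap.ker_rangeRestrict, Submodule.range_subtype])
  have hfin : ∀ i, ∃ m : ℕ, Module.length R (LinearMap.range (φ i)) = m := by
    intro i
    have : Module.length R (LinearMap.range (φ i)) ≠ ⊤ := by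
      intro h
      have h2 := hlen2 i
      rw [h, add_top] at h2
      exact ENat.natCast_ne_top _ h2
    exact ⟨_, (ENat.natCast_toNat this).symm⟩
  choose h hh using hfin
  by_cases hall : ∀ i, LinearMap.ker (φ i) = ⊥
  · have hB : ∀ i, h i = (t + i).choose t := by
      intro i
      have h2 := hlen2 i
      rw [hall i, Module.length_bot, zero_add, hh] at h2
      exact_mod_cast h2.symm
    refine ⟨1, 0, h, fun i => by rw [hlen1 i, hh], fun n => ?_⟩
    simp [hB]
  · push Not at hall
    obtain ⟨s, hs⟩ := hall
    obtain ⟨f, hf, hf0⟩ := (Submodule.ne_bot_iff _).1 hs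
    have hle1 : ∀ i, h i ≤ (t + i).choose t := by
      intro i
      have h2 := hlen2 i
      rw [hh] at h2
      have : (h i : ℕ∞) ≤ (((t + i).choose t : ℕ) : ℕ∞) := by
        rw [h2]
        exact le_add_self
      exact_mod_cast this
    have hle2 : ∀ i, h (i + s) + (t + i).choose t ≤ (t + (i + s)).choose t := by
      intro i
      let μ : homogeneousSubmodule (Fin (t + 1)) (ResidueField R) i →ₗ[R]
          homogeneousSubmodule (Fin (t + 1)) (ResidueField R) (i + s) :=
        { toFun := fun g => ⟨g.1 * f.1, IsHomogeneous.mul g.2 f.2⟩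
          map_add' := fun g g' => by ext1; simp [add_mul]
          map_smul' := fun r g => by ext1; simp }
      have hμ : ∀ g, μ g ∈ LinearMap.ker (φ (i + s)) := by
        intro g
        obtain ⟨F, hF, hFf⟩ := aux_lift s f
        obtain ⟨G, hG, rfl⟩ := aux_lift i g
        have e1 : μ ⟨map (IsLocalRing.residue R) G, hG.map _⟩ =
            ⟨map (IsLocalRing.residue R) (G * F), (hG.mul hF).map _⟩ := by
          ext1
          simp [μ, hFf]
        rw [LinearMap.mem_ker, e1, hφ _ _ (hG.mul hF), Submodule.Quotient.mk_eq_zero, map_mul, mul_smul, pow_add,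
          Submodule.mul_smul]
        refine Submodule.smul_mem_smul (aux_aeval_mem a i G hG) ?_
        rw [LinearMap.mem_ker, hFf, hφ _ _ hF, Submodule.Quotient.mk_eq_zero] at hf
        exact hf
      have hinj : Function.Injective (μ.codRestrict _ hμ) := by
        intro g g' hgg
        have e1 : g.1 * f.1 = g'.1 * f.1 := by
          have := congrArg (fun z => z.1.1) hgg
          exact this
        have hf1 : f.1 ≠ 0 := fun h => hf0 (Subtype.ext h)
        exact Subtype.ext (mul_right_cancel₀ hf1 e1)
      let ν : homogeneousSubmodule (Fin (t + 1)) (ResidueField R) i →ₗ[R]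
          LinearMap.ker (φ (i + s)) := μ.codRestrict _ hμ
      have hν : Function.Injective ν := hinj
      have h3 : Module.length R (homogeneousSubmodule (Fin (t + 1)) (ResidueField R) i) ≤
          Module.length R (LinearMap.ker (φ (i + s))) := Module.length_le_of_injective ν hν
      rw [aux_length] at h3
      have h2 := hlen2 (i + s)
      rw [hh] at h2
      have : ((h (i + s) + (t + i).choose t : ℕ) : ℕ∞) ≤ (((t + (i + s)).choose t : ℕ) : ℕ∞) := by
        rw [h2]
        push_cast
        rw [add_comm]
        gcongr
      exact_mod_cast this
    refine ⟨0, s, h, fun i => by rw [hlen1 i, hh], fun n => ⟨by simp, ?_⟩⟩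
    rw [zero_mul, zero_add]
    have hmono : ∀ i j, i ≤ j → (t + i).choose t ≤ (t + j).choose t :=
      fun i j hij => Nat.choose_le_choose _ (by omega)
    rcases le_total n s with hns | hns
    · calc ∑ i ∈ Finset.range n, h i ≤ ∑ i ∈ Finset.range n, (t + n).choose t :=
            Finset.sum_le_sum fun i hi => (hle1 i).trans
              (hmono _ _ (Finset.mem_range.1 hi).le)
        _ = n * (t + n).choose t := by simp
        _ ≤ _ := Nat.mul_le_mul_right _ hns
    · obtain ⟨k, rfl⟩ := Nat.exists_eq_add_of_le' hns
      have key : ∀ k, ∑ i ∈ Finset.range (k + s), h i + ∑ i ∈ Finset.range k, (t + i).choose t ≤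
          ∑ i ∈ Finset.range (k + s), (t + i).choose t := by
        intro k
        induction k with
        | zero => simpa using Finset.sum_le_sum fun i _ => hle1 i
        | succ k ih =>
          rw [show k + 1 + s = (k + s) + 1 by omega, Finset.sum_range_succ, Finset.sum_range_succ,
            Finset.sum_range_succ]
          have := hle2 k
          omega
      have h1 := key k
      rw [Finset.sum_range_add (fun i => (t + i).choose t) k s] at h1
      have h2 : ∑ i ∈ Finset.range s, (t + (k + i)).choose t ≤ s * (t + (k + s)).choose t := by
        calc _ ≤ ∑ i ∈ Finset.range s, (t + (k + s)).choose t :=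
              Finset.sum_le_sum fun i hi => hmono _ _
                (by have := Finset.mem_range.1 hi; omega)
          _ = _ := by simp
      omega

theorem aux_chain [IsNoetherianRing R] [Module.Finite R M] (t : ℕ) (a : Fin (t + 1) → R)
    (N₀ : Submodule R M) [IsArtinian R (M ⧸ N₀)] :
    ∀ N : Submodule R M, N₀ ≤ N → ∃ (c s : ℕ) (h : ℕ → ℕ),
      (∀ i, Module.length R (M ⧸ ((Ideal.span (Set.range a)) ^ i • N)) =
        h i + Module.length R (M ⧸ ((Ideal.span (Set.range a)) ^ i • (⊤ : Submodule R M)))) ∧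
      (∀ n, c * ∑ i ∈ Finset.range n, (t + i).choose t ≤ ∑ i ∈ Finset.range n, h i ∧
        ∑ i ∈ Finset.range n, h i ≤
          c * ∑ i ∈ Finset.range n, (t + i).choose t + s * (t + n).choose t) := by
  intro N
  induction N using WellFoundedGT.induction with
  | ind N ih =>
    intro hN
    by_cases htop : N = ⊤
    · subst htop
      exact ⟨0, 0, fun _ => 0, by simp, by simp⟩
    · have : IsArtinian R (M ⧸ N) :=
        isArtinian_of_surjective _ (Submodule.factor hN) (Submodule.factor_surjective hN)
      have : Nontrivial (M ⧸ N) := Submodule.Quotient.nontrivial_iff.2 htop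
      obtain ⟨A, hA, -⟩ := (eq_bot_or_exists_atom_le (⊤ : Submodule R (M ⧸ N))).resolve_left top_ne_bot
      have hcov : N ⋖ A.comap N.mkQ := by
        have := Submodule.comap_covBy_of_surjective (f := N.mkQ) N.mkQ_surjective hA.bot_covBy
        rwa [Submodule.comap_bot, Submodule.ker_mkQ] at this
      obtain ⟨c, s, h, h1, h2⟩ := aux_cover t a N _ hcov
      obtain ⟨c', s', h', h1', h2'⟩ := ih _ hcov.lt (hN.trans hcov.le)
      refine ⟨c + c', s + s', fun i => h i + h' i, fun i => ?_, fun n => ?_⟩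
      · rw [h1, h1']
        push_cast
        ring
      · have e1 := h2 n
        have e2 := h2' n
        simp only [Finset.sum_add_distrib, add_mul]
        omega

end Cover

theorem aux_sum_choose (t n : ℕ) :
    ∑ i ∈ Finset.range n, (t + i).choose t = (n + t).choose (t + 1) := by
  induction n with
  | zero => simp
  | succ n ih =>
    rw [Finset.sum_range_succ, ih, show n + 1 + t = (n + t) + 1 by omega,
      Nat.choose_succ_succ (n + t) t, add_comm t n, add_comm]

end Helpers
/-- **Mandal–Singh–Verma.** For a `d`-dimensional finite module `M` over a Noetherian local
ring and an ideal `J` generated by a system of parameters for `M`, `e₁(J,M) ≤ 0`. -/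
theorem stmt_2 (R M : Type u) [CommRing R] [IsLocalRing R] [IsNoetherianRing R]
    [AddCommGroup M] [Module R M] [Module.Finite R M]
    (d : ℕ) (hd : 1 ≤ d) (hdim : mdim R M = (d : ℕ∞))
    (J : Ideal R) (hpar : IsParameterIdeal R J d M)
    (e : ℕ → ℤ) (he : HasHilbCoeffs R J M d e) :
    e 1 ≤ 0 := by
  obtain ⟨t, rfl⟩ : ∃ t, d = t + 1 := ⟨d - 1, by omega⟩
  obtain ⟨⟨a, rfl⟩, -⟩ := hpar
  obtain ⟨ℓ, hℓ, hev⟩ := he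
  have hlen : ∀ n, Module.length R (M ⧸ ((Ideal.span (Set.range a)) ^ n • (⊤ : Submodule R M))) =
      (ℓ n : ℕ∞) := by
    intro n
    apply WithBot.coe_injective
    rw [Module.coe_length]
    exact hℓ n
  have hart : IsArtinian R (M ⧸ ((Ideal.span (Set.range a)) ^ 1 • (⊤ : Submodule R M))) := by
    have h1 : Module.length R (M ⧸ ((Ideal.span (Set.range a)) ^ 1 • (⊤ : Submodule R M))) ≠ ⊤ := by
      rw [hlen]
      exact ENat.natCast_ne_top _
    exact (isFiniteLength_iff_isNoetherian_isArtinian.1 (Module.length_ne_top_iff.1 h1)).2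
  obtain ⟨c, s, h, h1, h2⟩ := aux_chain t a _ _
    (le_refl ((Ideal.span (Set.range a)) ^ 1 • (⊤ : Submodule R M)))
  have hstep : ∀ i, ℓ (i + 1) = h i + ℓ i := by
    intro i
    have := h1 i
    rw [← Submodule.mul_smul, ← pow_add, hlen, hlen] at this
    exact_mod_cast this
  have h0 : ℓ 0 = 0 := by
    have := hlen 0
    rw [pow_zero, Submodule.one_smul, Module.length_eq_zero] at this
    exact_mod_cast this.symm
  have hsum : ∀ n, ℓ n = ∑ i ∈ Finset.range n, h i := by
    intro n
    induction n with
    | zero => simp [h0]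
    | succ n ih => rw [hstep, Finset.sum_range_succ, ih, add_comm]
  apply aux_final t e c s
  filter_upwards [hev] with n hn
  rw [← hn]
  have h3 := h2 n
  rw [← hsum, aux_sum_choose, add_comm t n] at h3
  exact ⟨by exact_mod_cast h3.1, by exact_mod_cast h3.2⟩
end

section
/- Let S be a Noetherian local ring and J = (a₁,...,a_d) an ideal generated by a regular sequence. Then for every n ≥ 1, the i-th Betti number of S/Jⁿ over S equals C(n+d-1, d-i)·C(n+i-2, i-1) for 1 ≤ i ≤ d. -/
open IsLocalRing Filter Function CategoryTheory

universe u

namespace EN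
open MonoidalCategory

section T
variable {S : Type u} [CommRing S] (P : ChainComplex (ModuleCat.{u} S) ℕ)

noncomputable def tc : ModuleCat.{u} S ⥤ ChainComplex (ModuleCat.{u} S) ℕ where
  obj M := (((tensoringLeft (ModuleCat.{u} S)).obj M).mapHomologicalComplex _).obj P
  map f := (NatTrans.mapHomologicalComplex ((tensoringLeft (ModuleCat.{u} S)).map f) _).app P
  map_id X := by
    ext i : 1
    simp
  map_comp f g := by
    ext i : 1
    simp

instance : (tc P).Additive where
  map_add {X Y f g} := by
    ext i : 1
    rw [HomologicalComplex.add_f_apply]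
    simp [tc]
    rfl

lemma tc_map_smul {M N : ModuleCat.{u} S} (f : M ⟶ N) (r : S) :
    (tc P).map (r • f) = r • (tc P).map f := by
  ext i : 1
  rw [HomologicalComplex.smul_f_apply]
  simp [tc]
  rfl

lemma tc_shortExact (hP : ∀ i, Projective (P.X i)) (X : ShortComplex (ModuleCat.{u} S)) (hX : X.ShortExact) :
    (X.map (tc P)).ShortExact := by
  apply HomologicalComplex.shortExact_of_degreewise_shortExact
  intro i
  have : Module.Projective S (P.X i) := (IsProjective.iff_projective (P.X i)).mpr (hP i)
  have : Module.Flat S (P.X i) := inferInstance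
  have h1 : Function.Exact X.f.hom X.g.hom := by
    have := hX.exact
    rwa [ShortComplex.ShortExact.moduleCat_exact_iff_function_exact] at this
  have hi : Function.Injective X.f.hom := (ModuleCat.mono_iff_injective _).1 hX.mono_f
  have hs : Function.Surjective X.g.hom := (ModuleCat.epi_iff_surjective _).1 hX.epi_g
  exact
    { exact := by
        rw [ShortComplex.ShortExact.moduleCat_exact_iff_function_exact]
        exact rTensor_exact (P.X i) h1 hs
      mono_f := (ModuleCat.mono_iff_injective _).2
        (Module.Flat.rTensor_preserves_injective_linearMap (M := P.X i) X.f.hom hi)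
      epi_g := (ModuleCat.epi_iff_surjective _).2 (LinearMap.rTensor_surjective (P.X i) hs) }

abbrev T (i : ℕ) (M : Type u) [AddCommGroup M] [Module S M] : Type u :=
  (((tc P).obj (ModuleCat.of S M)).homology i : ModuleCat.{u} S)

variable {M N Q : Type u} [AddCommGroup M] [Module S M] [AddCommGroup N] [Module S N] [AddCommGroup Q] [Module S Q]

noncomputable def Tm (i : ℕ) (f : M →ₗ[S] N) : T P i M →ₗ[S] T P i N :=
  (HomologicalComplex.homologyMap ((tc P).map (ModuleCat.ofHom f)) i).hom

lemma Tm_id (i : ℕ) : Tm P i (LinearMap.id : M →ₗ[S] M) = LinearMap.id := by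
  have : ModuleCat.ofHom (LinearMap.id : M →ₗ[S] M) = 𝟙 _ := rfl
  simp only [Tm, this, CategoryTheory.Functor.map_id, HomologicalComplex.homologyMap_id]
  rfl

lemma Tm_comp (i : ℕ) (g : N →ₗ[S] Q) (f : M →ₗ[S] N) : Tm P i (g ∘ₗ f) = Tm P i g ∘ₗ Tm P i f := by
  simp only [Tm, ModuleCat.ofHom_comp, CategoryTheory.Functor.map_comp, HomologicalComplex.homologyMap_comp]
  rfl

lemma Tm_add (i : ℕ) (f g : M →ₗ[S] N) : Tm P i (f + g) = Tm P i f + Tm P i g := by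
  simp only [Tm, ModuleCat.ofHom_add, Functor.map_add, HomologicalComplex.homologyMap_add]
  rfl

lemma Tm_smul (i : ℕ) (r : S) (f : M →ₗ[S] N) : Tm P i (r • f) = r • Tm P i f := by
  have : ModuleCat.ofHom (r • f) = r • ModuleCat.ofHom f := rfl
  simp only [Tm, this, tc_map_smul]
  have h := ShortComplex.homologyMap_smul (R := S)
    ((HomologicalComplex.shortComplexFunctor (ModuleCat.{u} S) _ i).map ((tc P).map (ModuleCat.ofHom f))) r
  exact congrArg ModuleCat.Hom.hom h

/-- short exact sequences of modules -/
structure SES (A B C : Type u) [AddCommGroup A] [Module S A] [AddCommGroup B] [Module S B]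
    [AddCommGroup C] [Module S C] where
  f : A →ₗ[S] B
  g : B →ₗ[S] C
  inj : Injective f
  ex : Function.Exact f g
  surj : Surjective g

variable {A B C : Type u} [AddCommGroup A] [Module S A] [AddCommGroup B] [Module S B]
    [AddCommGroup C] [Module S C]

@[simps]
def SES.sc (s : SES (S := S) A B C) : ShortComplex (ModuleCat.{u} S) :=
  ShortComplex.mk (ModuleCat.ofHom s.f) (ModuleCat.ofHom s.g) (by
    ext x; exact s.ex.apply_apply_eq_zero x)

lemma SES.scExact (s : SES (S := S) A B C) : s.sc.ShortExact where
  exact := by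
    rw [ShortComplex.ShortExact.moduleCat_exact_iff_function_exact]; exact s.ex
  mono_f := (ModuleCat.mono_iff_injective _).2 s.inj
  epi_g := (ModuleCat.epi_iff_surjective _).2 s.surj


noncomputable def del (hP : ∀ i, Projective (P.X i)) (i : ℕ) (s : SES (S := S) A B C) : T P (i+1) C →ₗ[S] T P i A :=
  ((tc_shortExact P hP s.sc s.scExact).δ (i+1) i rfl).hom

lemma Tm_exact₂ (hP : ∀ i, Projective (P.X i)) (i : ℕ) (s : SES (S := S) A B C) : Function.Exact (Tm P i s.f) (Tm P i s.g) := by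
  have := (tc_shortExact P hP s.sc s.scExact).homology_exact₂ i
  rw [ShortComplex.ShortExact.moduleCat_exact_iff_function_exact] at this
  exact this

lemma Tm_exact₁ (hP : ∀ i, Projective (P.X i)) (i : ℕ) (s : SES (S := S) A B C) : Function.Exact (del P hP i s) (Tm P i s.f) := by
  have := (tc_shortExact P hP s.sc s.scExact).homology_exact₁ (i+1) i rfl
  rw [ShortComplex.ShortExact.moduleCat_exact_iff_function_exact] at this
  exact this

lemma Tm_exact₃ (hP : ∀ i, Projective (P.X i)) (i : ℕ) (s : SES (S := S) A B C) : Function.Exact (Tm P (i+1) s.g) (del P hP i s) := by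
  have := (tc_shortExact P hP s.sc s.scExact).homology_exact₃ (i+1) i rfl
  rw [ShortComplex.ShortExact.moduleCat_exact_iff_function_exact] at this
  exact this

lemma Tm_surj₀ (hP : ∀ i, Projective (P.X i)) (s : SES (S := S) A B C) : Surjective (Tm P 0 s.g) := by
  have h := (tc_shortExact P hP s.sc s.scExact)
  have h' := h.epi_g
  have := HomologicalComplex.epi_homologyMap_of_epi_of_not_rel (s.sc.map (tc P)).g 0 (by simp)
  exact (ModuleCat.epi_iff_surjective _).1 this

variable {Aₓ Bₓ Cₓ : Type u} [AddCommGroup Aₓ] [Module S Aₓ] [AddCommGroup Bₓ] [Module S Bₓ]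
    [AddCommGroup Cₓ] [Module S Cₓ]

lemma del_nat (hP : ∀ i, Projective (P.X i)) (i : ℕ) (s : SES (S := S) A B C) (s' : SES (S := S) Aₓ Bₓ Cₓ) (α : A →ₗ[S] Aₓ)
   (β : B →ₗ[S] Bₓ) (γ : C →ₗ[S] Cₓ) (h1 : s'.f ∘ₗ α = β ∘ₗ s.f) (h2 : s'.g ∘ₗ β = γ ∘ₗ s.g) :
   Tm P i α ∘ₗ del P hP i s = del P hP i s' ∘ₗ Tm P (i+1) γ := by
  let φ : s.sc ⟶ s'.sc :=
    { τ₁ := ModuleCat.ofHom α, τ₂ := ModuleCat.ofHom β, τ₃ := ModuleCat.ofHom γ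
      comm₁₂ := by ext x; exact LinearMap.congr_fun h1 x
      comm₂₃ := by ext x; exact LinearMap.congr_fun h2 x }
  have := HomologicalComplex.HomologySequence.δ_naturality ((tc P).mapShortComplex.map φ)
    (tc_shortExact P hP s.sc s.scExact) (tc_shortExact P hP s'.sc s'.scExact) (i+1) i rfl
  have h := congrArg ModuleCat.Hom.hom this
  exact h

end T

section K
variable {S : Type u} [CommRing S] {k : ModuleCat.{u} S} (P : ProjectiveResolution k)
variable {M : Type u} [AddCommGroup M] [Module S M]

lemma T_kill (i : ℕ) (r : S) (hr : ∀ x : k, r • x = 0) (x : T P.complex i M) : r • x = 0 := by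
  have h0 : r • 𝟙 k = 0 := by ext x; exact hr x
  have H : Homotopy (r • 𝟙 P.complex) (0 : P.complex ⟶ P.complex) :=
    ProjectiveResolution.liftHomotopyZero _ (by
      rw [Linear.smul_comp, Category.id_comp]
      have : r • P.π = P.π ≫ (ChainComplex.single₀ (ModuleCat.{u} S)).map (r • 𝟙 k) := by
        ext x
        rw [HomologicalComplex.smul_f_apply, HomologicalComplex.comp_f,
          ChainComplex.single₀_map_f_zero]
        rfl
      rw [this, h0]; simp)
  have H' := ((tensoringLeft (ModuleCat.{u} S)).obj (ModuleCat.of S M)).mapHomotopy H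
  have e := H'.homologyMap_eq i
  have e2 : (((tensoringLeft (ModuleCat.{u} S)).obj (ModuleCat.of S M)).mapHomologicalComplex _).map (r • 𝟙 P.complex)
     = (tc P.complex).map (r • 𝟙 _) := by
    rw [tc_map_smul, CategoryTheory.Functor.map_id]
    ext i : 1
    have h : (ModuleCat.of S M) ◁ (r • 𝟙 (P.complex.X i)) = r • 𝟙 (ModuleCat.of S M ⊗ P.complex.X i) := by
      simp
    exact h
  rw [e2] at e
  have e3 : Tm P.complex i (r • (LinearMap.id : M →ₗ[S] M)) = 0 := by
    refine (congrArg ModuleCat.Hom.hom e).trans ?_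
    simp
    rfl
  rw [Tm_smul, Tm_id] at e3
  exact LinearMap.congr_fun e3 x

noncomputable def torIso (i : ℕ) (M : Type u) [AddCommGroup M] [Module S M] :
   ((Tor (ModuleCat.{u} S) i).obj (ModuleCat.of S M)).obj k ≃ₗ[S] T P.complex i M :=
  (P.isoLeftDerivedObj ((tensoringLeft (ModuleCat.{u} S)).obj (ModuleCat.of S M)) i).toLinearEquiv

noncomputable def tcUnit : (tc P.complex).obj (ModuleCat.of S S) ≅ P.complex :=
  ((NatIso.mapHomologicalComplex (leftUnitorNatIso (ModuleCat.{u} S)) _).app P.complex) ≪≫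
    (Functor.mapHomologicalComplexIdIso _ _).app P.complex

noncomputable def TUnit (i : ℕ) : T P.complex i S ≃ₗ[S] ((((ChainComplex.single₀ (ModuleCat.{u} S)).obj k).homology i : ModuleCat.{u} S)) :=
  ((HomologicalComplex.homologyMapIso (tcUnit P) i) ≪≫ asIso (HomologicalComplex.homologyMap P.π i)).toLinearEquiv

lemma T_unit_succ (i : ℕ) : Subsingleton (T P.complex (i+1) S) := by
  have : Subsingleton ((((ChainComplex.single₀ (ModuleCat.{u} S)).obj k).homology (i+1) : ModuleCat.{u} S)) := by
    apply ModuleCat.subsingleton_of_isZero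
    exact HomologicalComplex.isZero_single_obj_homology _ _ _ _ (by simp)
  exact (TUnit P (i+1)).toEquiv.subsingleton

noncomputable def T_unit_zero : T P.complex 0 S ≃ₗ[S] k :=
  TUnit P 0 ≪≫ₗ (HomologicalComplex.singleObjHomologySelfIso _ _ _).toLinearEquiv
end K
end EN

namespace EN
section I
variable {S : Type u} [CommRing S]

lemma pow_sup (I : Ideal S) (x : S) (n : ℕ) :
    (I ⊔ Ideal.span {x}) ^ (n+1) = I ^ (n+1) ⊔ Ideal.span {x} * (I ⊔ Ideal.span {x}) ^ n := by
  set X := Ideal.span {x}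
  have hI : I ≤ I ⊔ X := le_sup_left
  have hX : X ≤ I ⊔ X := le_sup_right
  apply le_antisymm
  · induction n with
    | zero => simp
    | succ n ih =>
      calc (I ⊔ X)^(n+1+1) = (I ⊔ X)^(n+1) * I ⊔ (I ⊔ X)^(n+1) * X := by
            rw [pow_succ _ (n+1), Ideal.mul_sup]
        _ ≤ I ^ (n+1+1) ⊔ X * (I ⊔ X)^(n+1) := by
            apply sup_le
            · calc _ ≤ (I ^ (n+1) ⊔ X * (I ⊔ X)^n) * I := Ideal.mul_mono_left ih
                _ = I ^ (n+1+1) ⊔ X * ((I ⊔ X)^n * I) := by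
                  rw [Ideal.sup_mul, pow_succ _ (n+1), mul_assoc]
                _ ≤ _ := by
                  apply sup_le_sup_left
                  apply Ideal.mul_mono_right
                  rw [pow_succ]
                  exact Ideal.mul_mono_right hI
            · rw [mul_comm]; exact le_sup_right
  · apply sup_le
    · exact Ideal.pow_right_mono hI _
    · rw [pow_succ']
      exact Ideal.mul_mono_left hX

lemma mem_pow_sup (I : Ideal S) (x : S) (n : ℕ) (y : S) :
    y ∈ (I ⊔ Ideal.span {x}) ^ (n+1) ↔ ∃ u ∈ I ^ (n+1), ∃ v ∈ (I ⊔ Ideal.span {x}) ^ n, u + x * v = y := by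
  rw [pow_sup, Submodule.mem_sup]
  simp only [Ideal.mem_span_singleton_mul]
  constructor
  · rintro ⟨u, hu, _, ⟨v, hv, rfl⟩, rfl⟩
    exact ⟨u, hu, v, hv, rfl⟩
  · rintro ⟨u, hu, v, hv, rfl⟩
    exact ⟨u, hu, _, ⟨v, hv, rfl⟩, rfl⟩

variable {ι : Type*} [DecidableEq ι] (a : ι → S)

def JB (B : Finset ι) : Ideal S := Ideal.span (a '' B)

lemma JB_insert (b : ι) (B : Finset ι) : JB a (insert b B) = JB a B ⊔ Ideal.span {a b} := by
  simp [JB, Set.image_insert_eq, Ideal.span_insert, sup_comm]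

lemma reg (H : ∀ (A : Finset ι) (j : ι), j ∉ A → ∀ s, a j * s ∈ JB a A → s ∈ JB a A)
    (B : Finset ι) : ∀ (A : Finset ι) (n : ℕ) (j : ι), Disjoint A B → j ∉ A → j ∉ B → ∀ s,
      a j * s ∈ JB a A ⊔ JB a B ^ n → s ∈ JB a A ⊔ JB a B ^ n := by
  induction B using Finset.induction_on with
  | empty =>
    intro A n j _ hj _ s hs
    cases n with
    | zero => simp
    | succ n =>
      have : JB a ∅ ^ (n+1) = ⊥ := by
        simp [JB]
      rw [this, sup_bot_eq] at hs ⊢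
      exact H A j hj s hs
  | insert b B hb ih =>
    intro A n
    induction n with
    | zero => intros; simp
    | succ n ihn =>
      intro j hd hjA hjB s hs
      simp only [Finset.disjoint_insert_right, Finset.mem_insert, not_or] at hd hjB
      have hBB : JB a B ≤ JB a (insert b B) := by rw [JB_insert]; exact le_sup_left
      have key : ∀ u, a b * u ∈ JB a A ⊔ JB a (insert b B) ^ (n+1) →
          u ∈ JB a A ⊔ JB a (insert b B) ^ n := by
        intro u hu
        obtain ⟨p, hp, q, hq, hpq⟩ := Submodule.mem_sup.1 hu
        rw [JB_insert, mem_pow_sup] at hq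
        obtain ⟨w, hw, v, hv, rfl⟩ := hq
        have h1 : u - v ∈ JB a A ⊔ JB a B ^ (n+1) := by
          refine ih A (n+1) b hd.2 hd.1 hb _ ?_
          have : a b * (u - v) = p + w := by linear_combination -hpq
          rw [this]
          exact Submodule.add_mem_sup hp hw
        have h2 : u - v ∈ JB a A ⊔ JB a (insert b B) ^ n := by
          have hle : JB a B ^ (n+1) ≤ JB a (insert b B) ^ n :=
            (Ideal.pow_le_pow_right (Nat.le_succ n)).trans (Ideal.pow_right_mono hBB _)
          have hle2 : JB a A ⊔ JB a B ^ (n+1) ≤ JB a A ⊔ JB a (insert b B) ^ n := sup_le_sup_left hle _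
          exact hle2 h1
        have h3 : v ∈ JB a A ⊔ JB a (insert b B) ^ n := by
          rw [JB_insert]
          exact Submodule.mem_sup_right hv
        simpa using add_mem h2 h3
      have h1 : s ∈ JB a (insert b A) ⊔ JB a B ^ (n+1) := by
        refine ih (insert b A) (n+1) j ?_ ?_ hjB.2 _ ?_
        · simp [hb, hd.2]
        · simp [hjA, hjB.1]
        · have hle : JB a A ⊔ JB a (insert b B) ^ (n+1) ≤ JB a (insert b A) ⊔ JB a B ^ (n+1) := by
            apply sup_le
            · rw [JB_insert a b A]; exact le_sup_left.trans le_sup_left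
            · rw [JB_insert a b B, pow_sup, JB_insert a b A]
              have h6 : Ideal.span {a b} * (JB a B ⊔ Ideal.span {a b}) ^ n ≤ Ideal.span {a b} :=
                Ideal.mul_le_left
              have h7 : Ideal.span {a b} ≤ JB a A ⊔ Ideal.span {a b} := le_sup_right
              exact sup_le le_sup_right (h6.trans (h7.trans le_sup_left))
          exact hle hs
      rw [JB_insert] at h1
      have h1' : s ∈ (JB a A ⊔ JB a B ^ (n+1)) ⊔ Ideal.span {a b} := by
        rwa [sup_right_comm]
      obtain ⟨w, hw, q, hq, rfl⟩ := Submodule.mem_sup.1 h1'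
      obtain ⟨s', rfl⟩ := Ideal.mem_span_singleton'.1 hq
      have hw' : w ∈ JB a A ⊔ JB a (insert b B) ^ (n+1) := by
        have hle : JB a A ⊔ JB a B ^ (n+1) ≤ JB a A ⊔ JB a (insert b B) ^ (n+1) :=
          sup_le_sup_left (Ideal.pow_right_mono hBB _) _
        exact hle hw
      have h4 : a b * (a j * s') ∈ JB a A ⊔ JB a (insert b B) ^ (n+1) := by
        have := sub_mem hs (Ideal.mul_mem_left _ (a j) hw')
        convert this using 1
        ring
      have h5 := ihn j (by simp [hd]) hjA (by simp [hjB]) s' (key _ h4)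
      refine add_mem hw' ?_
      obtain ⟨p, hp, q, hq5, rfl⟩ := Submodule.mem_sup.1 h5
      rw [add_mul]
      refine Submodule.add_mem_sup (Ideal.mul_mem_right _ _ hp) ?_
      rw [JB_insert] at hq5 ⊢
      rw [mem_pow_sup]
      exact ⟨0, zero_mem _, q, hq5, by ring⟩

lemma perm_reg [IsLocalRing S] [IsNoetherianRing S] {d : ℕ} (a : Fin d → S)
    (hreg : RingTheory.Sequence.IsRegular S (List.ofFn a)) (A : Finset (Fin d)) (j : Fin d)
    (hj : j ∉ A) (s : S) (hs : a j * s ∈ JB a A) : s ∈ JB a A := by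
  have hp : List.Perm (List.ofFn a) ((A.toList ++ j :: ((insert j A)ᶜ).toList).map a) := by
    rw [List.ofFn_eq_map]
    apply List.Perm.map
    rw [List.perm_ext_iff_of_nodup (List.nodup_finRange d)]
    · intro i; simp; tauto
    · rw [List.nodup_append]
      simp [Finset.nodup_toList]
      intro i hi
      refine ⟨fun h => hj (h ▸ hi), ?_⟩
      rintro b hb hb' rfl
      exact hb' hi
  have h := (IsLocalRing.isRegular_of_perm hreg hp).toIsWeaklyRegular
  rw [List.map_append, List.map_cons, RingTheory.Sequence.isWeaklyRegular_append_iff,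
    RingTheory.Sequence.isWeaklyRegular_cons_iff] at h
  have h2 := h.2.1
  rw [isSMulRegular_quotient_iff_mem_of_smul_mem] at h2
  have e : (Ideal.ofList (A.toList.map a) • (⊤ : Submodule S S)) = JB a A := by
    simp [JB, Ideal.ofList]
    congr 1
  rw [e] at h2
  exact h2 s hs

end I
end EN

namespace EN
section Main
variable {S : Type u} [CommRing S]

/-- multiplication by `x` as a map between ideals -/
def mulL (x : S) {I K : Ideal S} (h : ∀ y ∈ I, x * y ∈ K) : I →ₗ[S] K :=
  LinearMap.codRestrict K (x • I.subtype) (fun y => h y y.2)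

@[simp] lemma mulL_coe (x : S) {I K : Ideal S} (h : ∀ y ∈ I, x * y ∈ K) (y : I) :
    (mulL x h y : S) = x * y := rfl

def msSES (x : S) (I K0 K1 : Ideal S) (h0 : I ≤ K0) (h1 : I ≤ K1) (hx : ∀ y ∈ K0, x * y ∈ K1)
    (hs : ∀ y ∈ K1, ∃ u ∈ I, ∃ v ∈ K0, u + x * v = y) (hr : ∀ s, x * s ∈ I → s ∈ I) :
    SES (S := S) I (I × K0) K1 where
  f := LinearMap.inl S I K0 ∘ₗ ((-x) • LinearMap.id) + LinearMap.inr S I K0 ∘ₗ Submodule.inclusion h0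
  g := Submodule.inclusion h1 ∘ₗ LinearMap.fst S I K0 + mulL x hx ∘ₗ LinearMap.snd S I K0
  inj := by
    intro y z h
    have := congrArg (fun t => (t.2 : S)) h
    simpa using this
  ex := by
    rintro ⟨u, v⟩
    constructor
    · intro h
      have h' : (u : S) + x * v = 0 := by simpa using congrArg (Subtype.val) h
      have hv : (v : S) ∈ I := by
        apply hr
        have : x * (v : S) = - u := by linear_combination h'
        rw [this]; exact neg_mem u.2
      refine ⟨⟨v, hv⟩, ?_⟩
      ext
      · simp; linear_combination -h'
      · simp
    · rintro ⟨y, hy⟩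
      rw [← hy]
      ext
      simp
  surj := by
    rintro ⟨y, hy⟩
    obtain ⟨u, hu, v, hv, rfl⟩ := hs y hy
    exact ⟨(⟨u, hu⟩, ⟨v, hv⟩), by ext; simp⟩

variable {k : ModuleCat.{u} S} (P : ProjectiveResolution k)

lemma Tm_zero' (C : ChainComplex (ModuleCat.{u} S) ℕ) {M N : Type u} [AddCommGroup M] [Module S M]
    [AddCommGroup N] [Module S N] (i : ℕ) : Tm C i (0 : M →ₗ[S] N) = 0 := by
  have := Tm_smul C i (0 : S) (0 : M →ₗ[S] N)
  simpa using this

lemma T_subsingleton (C : ChainComplex (ModuleCat.{u} S) ℕ) (M : Type u) [AddCommGroup M] [Module S M]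
    [Subsingleton M] (i : ℕ) : Subsingleton (T C i M) := by
  have h : (LinearMap.id : M →ₗ[S] M) = 0 := Subsingleton.elim _ _
  have h2 := Tm_id (M := M) C i
  rw [h, Tm_zero'] at h2
  refine subsingleton_of_forall_eq 0 fun x => ?_
  exact (LinearMap.congr_fun h2 x).symm

noncomputable def TEquiv (C : ChainComplex (ModuleCat.{u} S) ℕ) {M N : Type u} [AddCommGroup M] [Module S M]
    [AddCommGroup N] [Module S N] (i : ℕ) (e : M ≃ₗ[S] N) : T C i M ≃ₗ[S] T C i N :=
  LinearEquiv.ofLinearMap (Tm C i e.toLinearMap) (Tm C i e.symm.toLinearMap)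
    (by rw [← Tm_comp]; simp [Tm_id]) (by rw [← Tm_comp]; simp [Tm_id])

noncomputable def TProd (C : ChainComplex (ModuleCat.{u} S) ℕ) (M N : Type u) [AddCommGroup M] [Module S M]
    [AddCommGroup N] [Module S N] (i : ℕ) : T C i (M × N) ≃ₗ[S] T C i M × T C i N :=
  LinearEquiv.ofLinearMap ((Tm C i (LinearMap.fst S M N)).prod (Tm C i (LinearMap.snd S M N)))
    ((Tm C i (LinearMap.inl S M N)).coprod (Tm C i (LinearMap.inr S M N)))
    (by
      apply LinearMap.prod_ext <;> apply LinearMap.ext <;> intro x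
      · have h1 := LinearMap.congr_fun (Tm_comp C i (LinearMap.fst S M N) (LinearMap.inl S M N)) x
        have h2 := LinearMap.congr_fun (Tm_comp C i (LinearMap.snd S M N) (LinearMap.inl S M N)) x
        simp [Tm_id, Tm_zero'] at h1 h2
        simp [← h1, ← h2]
      · have h1 := LinearMap.congr_fun (Tm_comp C i (LinearMap.fst S M N) (LinearMap.inr S M N)) x
        have h2 := LinearMap.congr_fun (Tm_comp C i (LinearMap.snd S M N) (LinearMap.inr S M N)) x
        simp [Tm_id, Tm_zero'] at h1 h2
        simp [← h1, ← h2])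
    (by
      have : LinearMap.inl S M N ∘ₗ LinearMap.fst S M N + LinearMap.inr S M N ∘ₗ LinearMap.snd S M N
        = LinearMap.id := by ext <;> simp
      rw [LinearMap.coprod_comp_prod, ← Tm_comp, ← Tm_comp, ← Tm_add, this, Tm_id])

lemma Tm_kill (i : ℕ) (x : S) (hx : ∀ y : k, x • y = 0) {M N : Type u} [AddCommGroup M] [Module S M]
    [AddCommGroup N] [Module S N] (f : M →ₗ[S] N) : Tm P.complex i (x • f) = 0 := by
  rw [Tm_smul]; ext y; exact T_kill P i x hx _

/-- inclusion `I^(n+1) → I^n` -/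
def pinc (I : Ideal S) (n : ℕ) : ↥(I ^ (n+1)) →ₗ[S] ↥(I ^ n) :=
  Submodule.inclusion (Ideal.pow_le_pow_right (Nat.le_succ n))

lemma mul_mem_pow (I : Ideal S) (x : S) (hx : x ∈ I) (n : ℕ) : ∀ y ∈ I ^ n, x * y ∈ I ^ (n+1) := by
  intro y hy
  rw [pow_succ']; exact Ideal.mul_mem_mul hx hy

def Zr (I : Ideal S) : Prop := ∀ n i, Tm P.complex i (pinc I n) = 0

def Sj (I : Ideal S) (G : Set S) (hG : G ⊆ I) : Prop :=
  ∀ n i, 1 ≤ n → ∀ W : Submodule S (T P.complex i ↥(I ^ (n+1))),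
    (∀ x, ∀ hx : x ∈ G, ∀ y, Tm P.complex i (mulL x (mul_mem_pow I x (hG hx) n)) y ∈ W) → W = ⊤

lemma T_top_succ (I : Ideal S) (i : ℕ) : Subsingleton (T P.complex (i+1) ↥(I ^ 0)) := by
  have := T_unit_succ P i
  have e : ↥(I ^ 0) ≃ₗ[S] S := (LinearEquiv.ofEq _ _ (by simp)) ≪≫ₗ Submodule.topEquiv
  exact (TEquiv P.complex (i+1) e).toEquiv.subsingleton

lemma Zr_of_Sj (I : Ideal S) (G : Set S) (hG : G ⊆ I) (hk : ∀ x ∈ G, ∀ y : k, x • y = 0)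
    (h : Sj P I G hG) (h0 : Tm P.complex 0 (pinc I 0) = 0) : Zr P I := by
  intro n i
  cases n with
  | zero =>
    cases i with
    | zero => exact h0
    | succ i =>
      have := T_top_succ P I i
      exact Subsingleton.elim _ _
  | succ n =>
    rw [← LinearMap.ker_eq_top]
    apply h (n+1) i (by omega)
    intro x hx y
    rw [LinearMap.mem_ker]
    rw [← LinearMap.comp_apply, ← Tm_comp]
    have : pinc I (n+1) ∘ₗ mulL x (mul_mem_pow I x (hG hx) (n+1)) = x • LinearMap.id := by
      ext y; simp [pinc]
    rw [this, Tm_kill P i x (hk x hx)]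
    rfl

def bet (d n i : ℕ) : ℕ := (n + d - 1).choose (n + i) * (n + i - 1).choose i

lemma bet_zero (d n : ℕ) : bet (d+1) (n+1) 0 = bet d (n+1) 0 + bet (d+1) n 0 := by
  simp only [bet, Nat.choose_zero_right, mul_one, add_zero]
  have h1 : n + 1 + (d + 1) - 1 = (n + d) + 1 := by omega
  have h2 : n + 1 + d - 1 = n + d := by omega
  have h3 : n + (d + 1) - 1 = n + d := by omega
  rw [h1, h2, h3, Nat.choose_succ_succ, add_comm]

lemma bet_succ (d n i : ℕ) :
    bet (d+1) (n+1) (i+1) = bet d (n+1) (i+1) + bet (d+1) n (i+1) + bet d (n+1) i := by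
  simp only [bet]
  have h1 : n + 1 + (d + 1) - 1 = (n + d) + 1 := by omega
  have h2 : n + 1 + d - 1 = n + d := by omega
  have h3 : n + (d + 1) - 1 = n + d := by omega
  have h4 : n + 1 + (i + 1) = (n + i + 1) + 1 := by omega
  have h5 : n + i + 1 + 1 - 1 = (n + i) + 1 := by omega
  have h6 : n + (i + 1) - 1 = n + i := by omega
  have h7 : n + 1 + i = n + i + 1 := by omega
  have h8 : n + i + 1 - 1 = n + i := by omega
  have h9 : n + (i + 1) = n + i + 1 := by omega
  rw [h1, h2, h3, h4, h5, h6, h7, h8, h9, Nat.choose_succ_succ, Nat.choose_succ_succ (n + i) i]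
  ring

section Step
variable (I K : Ideal S) (x : S)

lemma IK_le {I K : Ideal S} {x : S} (hK : K = I ⊔ Ideal.span {x}) : I ≤ K := hK ▸ le_sup_left
lemma x_mem {I K : Ideal S} {x : S} (hK : K = I ⊔ Ideal.span {x}) : x ∈ K :=
  hK ▸ (Ideal.mem_sup_right (Ideal.mem_span_singleton_self x))

/-- the Mayer-Vietoris sequence -/
def stepSES (hK : K = I ⊔ Ideal.span {x}) (hr : ∀ n s, x * s ∈ I ^ n → s ∈ I ^ n) (n : ℕ) : SES (S := S) ↥(I ^ (n+1)) (↥(I ^ (n+1)) × ↥(K ^ n)) ↥(K ^ (n+1)) :=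
  msSES x _ _ _ ((Ideal.pow_le_pow_right (Nat.le_succ n)).trans (Ideal.pow_right_mono (IK_le hK) n))
    (Ideal.pow_right_mono (IK_le hK) _) (mul_mem_pow K x (x_mem hK) n)
    (fun y hy => by subst hK; exact (mem_pow_sup I x n y).1 hy) (hr (n+1))

/-- inclusion of powers -/
def kinc (hK : K = I ⊔ Ideal.span {x}) (n : ℕ) : ↥(I ^ n) →ₗ[S] ↥(K ^ n) := Submodule.inclusion (Ideal.pow_right_mono (IK_le hK) n)

lemma step_f (hK : K = I ⊔ Ideal.span {x}) 
    (hr : ∀ n s, x * s ∈ I ^ n → s ∈ I ^ n) (hx : ∀ y : k, x • y = 0) (hZ : Zr P I) (n i : ℕ) :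
    Tm P.complex i (stepSES I K x hK hr n).f = 0 := by
  have : (stepSES I K x hK hr n).f = x • (-(LinearMap.inl S ↥(I ^ (n+1)) ↥(K ^ n))) +
      (LinearMap.inr S ↥(I ^ (n+1)) ↥(K ^ n) ∘ₗ kinc I K x hK n) ∘ₗ pinc I n := by
    ext y <;> simp [stepSES, msSES, kinc, pinc]
  rw [this, Tm_add, Tm_kill P i x hx, Tm_comp, hZ n i]
  simp

lemma step_g_inj (hK : K = I ⊔ Ideal.span {x}) 
    (hr : ∀ n s, x * s ∈ I ^ n → s ∈ I ^ n) (hx : ∀ y : k, x • y = 0) (hZ : Zr P I) (n i : ℕ) :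
    Injective (Tm P.complex i (stepSES I K x hK hr n).g) := by
  rw [injective_iff_map_eq_zero]
  intro y hy
  obtain ⟨z, rfl⟩ := (Tm_exact₂ P.complex P.projective i (stepSES I K x hK hr n) y).1 hy
  rw [step_f P I K x hK hr hx hZ]; rfl

lemma step_del_surj (hK : K = I ⊔ Ideal.span {x}) 
    (hr : ∀ n s, x * s ∈ I ^ n → s ∈ I ^ n) (hx : ∀ y : k, x • y = 0) (hZ : Zr P I) (n i : ℕ) :
    Surjective (del P.complex P.projective i (stepSES I K x hK hr n)) := by
  intro y
  refine (Tm_exact₁ P.complex P.projective i (stepSES I K x hK hr n) y).1 ?_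
  rw [step_f P I K x hK hr hx hZ]; rfl

lemma step_len_zero (hK : K = I ⊔ Ideal.span {x}) 
    (hr : ∀ n s, x * s ∈ I ^ n → s ∈ I ^ n) (hx : ∀ y : k, x • y = 0) (hZ : Zr P I) (n : ℕ) :
    Module.length S (T P.complex 0 ↥(K ^ (n+1))) =
      Module.length S (T P.complex 0 ↥(I ^ (n+1))) + Module.length S (T P.complex 0 ↥(K ^ n)) := by
  rw [← Module.length_prod, ← (TProd P.complex _ _ 0).length_eq]
  exact (LinearEquiv.ofBijective (Tm P.complex 0 (stepSES I K x hK hr n).g)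
    ⟨step_g_inj P I K x hK hr hx hZ n 0, Tm_surj₀ P.complex P.projective _⟩).length_eq.symm

lemma step_len_succ (hK : K = I ⊔ Ideal.span {x}) 
    (hr : ∀ n s, x * s ∈ I ^ n → s ∈ I ^ n) (hx : ∀ y : k, x • y = 0) (hZ : Zr P I) (n i : ℕ) :
    Module.length S (T P.complex (i+1) ↥(K ^ (n+1))) =
      Module.length S (T P.complex (i+1) ↥(I ^ (n+1))) + Module.length S (T P.complex (i+1) ↥(K ^ n))
       + Module.length S (T P.complex i ↥(I ^ (n+1))) := by
  rw [← Module.length_prod, ← (TProd P.complex _ _ (i+1)).length_eq]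
  exact Module.length_eq_add_of_exact _ _ (step_g_inj P I K x hK hr hx hZ n (i+1))
    (step_del_surj P I K x hK hr hx hZ n i) (Tm_exact₃ P.complex P.projective i _)

lemma step_g_eq (hK : K = I ⊔ Ideal.span {x}) (hr : ∀ n s, x * s ∈ I ^ n → s ∈ I ^ n) (n : ℕ) : (stepSES I K x hK hr n).g = kinc I K x hK (n+1) ∘ₗ LinearMap.fst S _ _ +
   mulL x (mul_mem_pow K x (x_mem hK) n) ∘ₗ LinearMap.snd S _ _ := rfl

lemma step_Sj (hK : K = I ⊔ Ideal.span {x}) 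
    (hr : ∀ n s, x * s ∈ I ^ n → s ∈ I ^ n) (hx : ∀ y : k, x • y = 0) (hZ : Zr P I) (G : Set S) (hG : G ⊆ I) (hS : Sj P I G hG)
    (hG' : insert x G ⊆ K) : Sj P K (insert x G) hG' := by
  intro n i hn W hW
  obtain ⟨m, rfl⟩ : ∃ m, n = m + 1 := ⟨n - 1, by omega⟩
  have h1 : ∀ y, Tm P.complex i (kinc I K x hK (m+1+1)) y ∈ W := by
    have : W.comap (Tm P.complex i (kinc I K x hK (m+1+1))) = ⊤ := by
      apply hS (m+1) i hn
      intro z hz y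
      rw [Submodule.mem_comap, ← LinearMap.comp_apply, ← Tm_comp]
      have : kinc I K x hK (m+1+1) ∘ₗ mulL z (mul_mem_pow I z (hG hz) (m+1)) =
        mulL z (mul_mem_pow K z (hG' (Set.mem_insert_of_mem _ hz)) (m+1)) ∘ₗ kinc I K x hK (m+1) := by
        ext y; simp [kinc]
      rw [this, Tm_comp]
      exact hW z (Set.mem_insert_of_mem _ hz) _
    intro y
    have hy : y ∈ W.comap (Tm P.complex i (kinc I K x hK (m+1+1))) := this ▸ trivial
    exact hy
  have h2 : ∀ y, Tm P.complex i (stepSES I K x hK hr (m+1)).g y ∈ W := by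
    intro y
    rw [step_g_eq, Tm_add, Tm_comp, Tm_comp]
    exact add_mem (h1 _) (hW x (Set.mem_insert _ _) _)
  rw [eq_top_iff]
  intro z _
  cases i with
  | zero =>
    obtain ⟨y, rfl⟩ := Tm_surj₀ P.complex P.projective (stepSES I K x hK hr (m+1)) z
    exact h2 y
  | succ i =>
    have h3 : W.map (del P.complex P.projective i (stepSES I K x hK hr (m+1))) = ⊤ := by
      apply hS (m+1) i hn
      intro t ht y
      obtain ⟨y', rfl⟩ := step_del_surj P I K x hK hr hx hZ m i y
      have htK := hG' (Set.mem_insert_of_mem x ht)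
      have hnat := del_nat P.complex P.projective i (stepSES I K x hK hr m) (stepSES I K x hK hr (m+1))
        (mulL t (mul_mem_pow I t (hG ht) (m+1)))
        (LinearMap.prodMap (mulL t (mul_mem_pow I t (hG ht) (m+1))) (mulL t (mul_mem_pow K t htK m)))
        (mulL t (mul_mem_pow K t htK (m+1)))
        (by ext y <;> simp [stepSES, msSES] <;> try ring)
        (by ext y <;> simp [stepSES, msSES] <;> try ring)
      rw [← LinearMap.comp_apply, hnat, LinearMap.comp_apply]
      exact Submodule.mem_map_of_mem (hW t (Set.mem_insert_of_mem x ht) _)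
    have h4 : del P.complex P.projective i (stepSES I K x hK hr (m+1)) z ∈
      W.map (del P.complex P.projective i (stepSES I K x hK hr (m+1))) := h3 ▸ trivial
    obtain ⟨w, hw, hwz⟩ := h4
    obtain ⟨y, hy⟩ := (Tm_exact₃ P.complex P.projective i (stepSES I K x hK hr (m+1)) (z - w)).1
      (by rw [map_sub, hwz, sub_self])
    have : z = w + (z - w) := by abel
    rw [this, ← hy]
    exact add_mem hw (h2 y)

lemma step_zero (hK : K = I ⊔ Ideal.span {x}) 
    (hr : ∀ n s, x * s ∈ I ^ n → s ∈ I ^ n) (hx : ∀ y : k, x • y = 0) (hZ : Zr P I) : Tm P.complex 0 (pinc K 0) = 0 := by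
  apply LinearMap.ext
  intro z
  obtain ⟨y, rfl⟩ := Tm_surj₀ P.complex P.projective (stepSES I K x hK hr 0) z
  rw [← LinearMap.comp_apply, ← Tm_comp]
  have : pinc K 0 ∘ₗ (stepSES I K x hK hr 0).g = (kinc I K x hK 0 ∘ₗ pinc I 0) ∘ₗ LinearMap.fst S _ _ +
      x • LinearMap.snd S _ _ := by
    ext y <;> simp [stepSES, msSES, pinc, kinc]
  rw [this, Tm_add, Tm_kill P 0 x hx, Tm_comp, Tm_comp, hZ 0 0]
  simp

end Step

lemma main_ind {ι : Type*} [DecidableEq ι] (a : ι → S)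
    (H : ∀ (A : Finset ι) (j : ι), j ∉ A → ∀ s, a j * s ∈ JB a A → s ∈ JB a A)
    (hk : ∀ j, ∀ y : k, a j • y = 0) (hlen : Module.length S k = 1) (B : Finset ι) :
    (∃ h, Sj P (JB a B) (a '' B) h) ∧ Zr P (JB a B) ∧
      ∀ n i, Module.length S (T P.complex i ↥(JB a B ^ n)) = bet B.card n i := by
  have len0 : ∀ (I : Ideal S) (d i : ℕ), Module.length S (T P.complex i ↥(I ^ 0)) = bet d 0 i := by
    intro I d i
    cases i with
    | zero =>
      have e : ↥(I ^ 0) ≃ₗ[S] S := (LinearEquiv.ofEq _ _ (by simp)) ≪≫ₗ Submodule.topEquiv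
      rw [(TEquiv P.complex 0 e).length_eq, (T_unit_zero P).length_eq, hlen]
      simp [bet]
    | succ i =>
      have := T_top_succ P I i
      rw [Module.length_eq_zero]
      simp [bet]
  induction B using Finset.induction_on with
  | empty =>
    have hb : ∀ n, JB a (∅ : Finset ι) ^ (n+1) = ⊥ := by intro n; simp [JB]
    have hs : ∀ n, Subsingleton ↥(JB a (∅ : Finset ι) ^ (n+1)) := by
      intro n; rw [hb]; infer_instance
    have hs2 : ∀ n i, Subsingleton (T P.complex i ↥(JB a (∅ : Finset ι) ^ (n+1))) :=
      fun n i => have := hs n; T_subsingleton _ _ _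
    refine ⟨⟨by simp, ?_⟩, ?_, ?_⟩
    · intro n i _ W _
      have := hs2 n i
      exact Subsingleton.elim _ _
    · intro n i
      have := hs2 n i
      exact Subsingleton.elim _ _
    · intro n i
      cases n with
      | zero => exact len0 _ _ _
      | succ n =>
        have := hs2 n i
        rw [Module.length_eq_zero]
        have : bet 0 (n+1) i = 0 := by
          simp only [bet]
          rw [Nat.choose_eq_zero_of_lt (by omega), zero_mul]
        simp [this]
  | insert b B hb ih =>
    obtain ⟨⟨hG, hS⟩, hZ, hL⟩ := ih
    have hK := JB_insert a b B
    have hr : ∀ n s, a b * s ∈ JB a B ^ n → s ∈ JB a B ^ n := by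
      intro n s hs
      have := reg a H B ∅ n b (by simp) (by simp) hb s
      have h0 : JB a (∅ : Finset ι) = ⊥ := by simp [JB]
      rw [h0, bot_sup_eq] at this
      exact this hs
    have hG' : insert (a b) (a '' B) ⊆ JB a (insert b B) := by
      rw [← Set.image_insert_eq, ← Finset.coe_insert]
      exact Ideal.subset_span
    have hSK := step_Sj P _ _ _ hK hr (hk b) hZ _ hG hS hG'
    have hZK : Zr P (JB a (insert b B)) := by
      refine Zr_of_Sj P _ _ hG' ?_ hSK (step_zero P _ _ _ hK hr (hk b) hZ)
      rw [← Set.image_insert_eq]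
      rintro _ ⟨j, _, rfl⟩
      exact hk j
    refine ⟨?_, hZK, ?_⟩
    · have : a '' ((insert b B : Finset ι) : Set ι) = insert (a b) (a '' B) := by
        rw [Finset.coe_insert, Set.image_insert_eq]
      rw [this]
      exact ⟨hG', hSK⟩
    · intro n
      rw [Finset.card_insert_of_notMem hb]
      induction n with
      | zero => intro i; exact len0 _ _ _
      | succ n ihn =>
        intro i
        cases i with
        | zero =>
          rw [step_len_zero P _ _ _ hK hr (hk b) hZ, hL, ihn, bet_zero]; push_cast; rfl
        | succ i =>
          rw [step_len_succ P _ _ _ hK hr (hk b) hZ, hL, ihn, hL, bet_succ]; push_cast; rfl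

def quotSES (I : Ideal S) : SES (S := S) I S (S ⧸ I) where
  f := I.subtype
  g := I.mkQ
  inj := Subtype.val_injective
  ex := by
    intro y; simp [Ideal.Quotient.eq_zero_iff_mem]
  surj := Submodule.mkQ_surjective I

lemma quot_len (I : Ideal S) (hZ : Zr P I) (n i : ℕ) :
    Module.length S (T P.complex (i+1) (S ⧸ I ^ (n+1))) = Module.length S (T P.complex i ↥(I ^ (n+1))) := by
  have hf : Tm P.complex i (quotSES (I ^ (n+1))).f = 0 := by
    have : (quotSES (I ^ (n+1))).f = (I ^ n).subtype ∘ₗ pinc I n := by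
      ext y; simp [quotSES, pinc]
    rw [this, Tm_comp, hZ]; simp
  have hss := T_unit_succ P i
  refine (LinearEquiv.ofBijective (del P.complex P.projective i (quotSES (I ^ (n+1)))) ⟨?_, ?_⟩).length_eq
  · rw [injective_iff_map_eq_zero]
    intro y hy
    obtain ⟨z, rfl⟩ := (Tm_exact₃ P.complex P.projective i (quotSES (I ^ (n+1))) y).1 hy
    rw [Subsingleton.elim z 0, map_zero]
  · intro y
    refine (Tm_exact₁ P.complex P.projective i (quotSES (I ^ (n+1))) y).1 ?_
    rw [hf]; rfl

end Main
end EN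

/-- **Eagon–Northcott.** If `J = (a₁,…,a_d)` is generated by a regular sequence in a Noetherian
local ring `S`, then for `n ≥ 1` and `1 ≤ i ≤ d` the `i`-th Betti number of `S/Jⁿ` equals
`C(n+d-1, d-i)·C(n+i-2, i-1)`. -/
theorem stmt_7 (S : Type u) [CommRing S] [IsLocalRing S] [IsNoetherianRing S]
    (d : ℕ) (a : Fin d → S) (hreg : RingTheory.Sequence.IsRegular S (List.ofFn a))
    (J : Ideal S) (hJ : J = Ideal.span (Set.range a)) :
    ∀ n i : ℕ, 1 ≤ n → 1 ≤ i → i ≤ d →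
      mlen S (((Tor (ModuleCat.{u} S) i).obj (ModuleCat.of S (S ⧸ J ^ n))).obj
          (ModuleCat.of S (IsLocalRing.ResidueField S)))
        = ((((n + d - 1).choose (d - i) * (n + i - 2).choose (i - 1) : ℕ) : ℕ∞) :
            WithBot ℕ∞) := by
  intro n i hn hi hid
  obtain ⟨n, rfl⟩ : ∃ m, n = m + 1 := ⟨n - 1, by omega⟩
  obtain ⟨i, rfl⟩ : ∃ m, i = m + 1 := ⟨i - 1, by omega⟩
  have hmax : ∀ j, a j ∈ maximalIdeal S := by
    intro j
    refine IsLocalRing.le_maximalIdeal (J := Ideal.span {r | r ∈ List.ofFn a}) ?_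
      (Ideal.subset_span (by simp))
    intro h
    apply hreg.top_ne_smul
    change _ = Ideal.span {r | r ∈ List.ofFn a} • ⊤
    rw [h]; simp
  let P : ProjectiveResolution (ModuleCat.of S (IsLocalRing.ResidueField S)) :=
    ProjectiveResolution.of _
  have hk : ∀ j, ∀ y : ModuleCat.of S (IsLocalRing.ResidueField S), a j • y = 0 := by
    intro j y
    rw [Algebra.smul_def]
    have : algebraMap S (IsLocalRing.ResidueField S) (a j) = 0 :=
      (IsLocalRing.residue_eq_zero_iff _).2 (hmax j)
    rw [this, zero_mul]
  have hlen : Module.length S (ModuleCat.of S (IsLocalRing.ResidueField S)) = 1 := by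
    change Module.length S (IsLocalRing.ResidueField S) = 1
    rw [Module.length_eq_one_iff]
    change IsSimpleModule S (S ⧸ maximalIdeal S)
    rw [isSimpleModule_iff_isCoatom]
    exact (maximalIdeal.isMaximal S).out
  obtain ⟨-, hZ, hL⟩ := EN.main_ind P a (EN.perm_reg a hreg) hk hlen Finset.univ
  have hJ' : J = EN.JB a Finset.univ := by simp [hJ, EN.JB]
  unfold mlen
  rw [← Module.coe_length]
  congr 1
  rw [(EN.torIso P (i+1) (S ⧸ J ^ (n+1))).length_eq, hJ', EN.quot_len P _ hZ, hL]
  simp only [Finset.card_univ, Fintype.card_fin, EN.bet]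
  congr 2
  · rw [← Nat.choose_symm (by omega)]
    congr 1; omega
end

section
/- Let (S,n) be a regular local ring, I₁,...,I_g Cohen-Macaulay ideals of height h with Iᵢ + Iⱼ n-primary for i ≠ j, R = S/(I₁ ∩ ... ∩ I_g) of dimension d ≥ 2, J = (a₁,...,a_d) with images forming a system of parameters of R, K = JR, and L = [⊕ᵢ S/Iᵢ]/R. If J ⊆ ann(L), then eᵢ(K) = (-1)ⁱ·λ(L) for i = 1,...,d-1 and e_d(K) = 0; in particular e₁(K) = -λ(L) < 0. -/
open IsLocalRing Filter Function CategoryTheory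

universe u

section Filtration

variable {A : Type*} [CommRing A] {M : Type*} [AddCommGroup M] [Module A M]

lemma smul_top_of_mem {I : Ideal A} {N : Submodule A M} {w : M} (h : w ∈ I • N) :
    w ∈ (I • ⊤ : Submodule A M) :=
  (smul_mono_right I (le_top : N ≤ ⊤)) h

/-- reversed weakly regular sequences -/
def QReg (M : Type*) [AddCommGroup M] [Module A M] : List A → Prop
  | [] => True
  | x :: l => QReg M l ∧ ∀ w : M, x • w ∈ (Ideal.ofList l • ⊤ : Submodule A M) →
      w ∈ (Ideal.ofList l • ⊤ : Submodule A M)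

lemma sup_span_pow (J' : Ideal A) (x : A) (n : ℕ) :
    (Ideal.span {x} ⊔ J') ^ (n + 1) =
      J' ^ (n + 1) ⊔ Ideal.span {x} * (Ideal.span {x} ⊔ J') ^ n := by
  induction n with
  | zero => simp [sup_comm]
  | succ n ih =>
    apply le_antisymm
    · rw [pow_succ' _ (n + 1)]
      conv_lhs => rw [Ideal.sup_mul]
      apply sup_le
      · exact le_sup_right
      · rw [ih, Ideal.mul_sup]
        apply sup_le
        · rw [← pow_succ']; exact le_sup_left
        · refine le_trans ?_ le_sup_right
          rw [← ih, mul_left_comm]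
          apply Ideal.mul_mono_right
          rw [pow_succ' _ n]
          exact Ideal.mul_mono_left le_sup_right
    · apply sup_le
      · exact Ideal.pow_right_mono le_sup_right _
      · rw [pow_succ' _ (n + 1)]
        exact Ideal.mul_mono_left le_sup_left

lemma mem_cons_pow (l : List A) (x : A) (n : ℕ) (N : Submodule A M) (w : M) :
    w ∈ (Ideal.ofList (x :: l) ^ (n + 1)) • N ↔
      ∃ u ∈ (Ideal.ofList l ^ (n + 1)) • N, ∃ v ∈ (Ideal.ofList (x :: l) ^ n) • N,
        u + x • v = w := by
  rw [Ideal.ofList_cons, sup_span_pow, Submodule.sup_smul, Submodule.mul_smul, Submodule.mem_sup]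
  constructor
  · rintro ⟨u, hu, z, hz, rfl⟩
    rw [Submodule.ideal_span_singleton_smul] at hz
    obtain ⟨v, hv, rfl⟩ := hz
    exact ⟨u, hu, v, hv, rfl⟩
  · rintro ⟨u, hu, v, hv, rfl⟩
    exact ⟨u, hu, _, Submodule.smul_mem_smul (Ideal.mem_span_singleton_self x) hv, rfl⟩

lemma ofList_le_cons (l : List A) (x : A) : Ideal.ofList l ≤ Ideal.ofList (x :: l) := by
  rw [Ideal.ofList_cons]; exact le_sup_right

lemma mem_ofList_cons (l : List A) (x : A) : x ∈ Ideal.ofList (x :: l) := by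
  rw [Ideal.ofList_cons]; exact Ideal.mem_sup_left (Ideal.mem_span_singleton_self x)


lemma pow_succ_smul_le {J' J : Ideal A} (h : J' ≤ J) {N : Submodule A M}
    (hN : J • ⊤ ≤ N) (n : ℕ) : (J' ^ (n + 1)) • (⊤ : Submodule A M) ≤ J ^ n • N := by
  rw [pow_succ, Submodule.mul_smul]
  exact Submodule.smul_mono (Ideal.pow_right_mono h n) ((Submodule.smul_mono_left h).trans hN)

lemma reg_pow_of (l : List A) (y : A)
    (H : ∀ (n : ℕ) (w : M), w ∈ (Ideal.ofList l ^ n • ⊤ : Submodule A M) →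
      y • w ∈ (Ideal.ofList l ^ n • (Ideal.ofList l • ⊤) : Submodule A M) →
      w ∈ (Ideal.ofList l ^ n • (Ideal.ofList l • ⊤) : Submodule A M)) (n : ℕ) (w : M)
    (hw : y • w ∈ (Ideal.ofList l ^ n • ⊤ : Submodule A M)) :
    w ∈ (Ideal.ofList l ^ n • ⊤ : Submodule A M) := by
  induction n with
  | zero => simp
  | succ n ih =>
    rw [pow_succ, Submodule.mul_smul] at hw ⊢
    exact H n w (ih (smul_top_of_mem hw)) hw

lemma reg_filt (l : List A) (hl : QReg M l) (n : ℕ) (N : Submodule A M)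
    (hN : Ideal.ofList l • ⊤ ≤ N) (y : A) (hy : ∀ w : M, y • w ∈ N → w ∈ N) (w : M)
    (hw : w ∈ (Ideal.ofList l ^ n • ⊤ : Submodule A M))
    (hyw : y • w ∈ Ideal.ofList l ^ n • N) : w ∈ Ideal.ofList l ^ n • N := by
  induction l generalizing n N y w with
  | nil =>
    cases n with
    | zero => simp at hyw ⊢; exact hy w hyw
    | succ n =>
      simp at hw
      simp [hw]
  | cons x l ihl =>
    obtain ⟨hl1, hl2⟩ := hl
    have hN' : Ideal.ofList l • ⊤ ≤ N :=
      (Submodule.smul_mono_left (ofList_le_cons l x)).trans hN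
    have hx := reg_pow_of (M := M) l x
      (fun n w hw h => ihl hl1 n _ le_rfl x hl2 w hw h)
    induction n generalizing w with
    | zero => simp at hyw ⊢; exact hy w hyw
    | succ n ihn =>
      rw [mem_cons_pow] at hw hyw ⊢
      obtain ⟨w1, hw1, w2, hw2, rfl⟩ := hw
      obtain ⟨u, hu, v, hv, huv⟩ := hyw
      have e1 : x • (v - y • w2) = y • w1 - u := by
        rw [smul_sub, sub_eq_sub_iff_add_eq_add, add_comm, huv, smul_add, smul_comm x y]
      have h1 : v - y • w2 ∈ (Ideal.ofList l ^ (n + 1) • ⊤ : Submodule A M) := by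
        apply hx
        rw [e1]
        exact sub_mem (Submodule.smul_mem _ _ hw1) (smul_top_of_mem hu)
      have h2 : x • (v - y • w2) ∈ Ideal.ofList l ^ (n + 1) • N := by
        have : x • (v - y • w2) ∈ Ideal.span {x} • (Ideal.ofList l ^ (n + 1) • ⊤ : Submodule A M) :=
          Submodule.smul_mem_smul (Ideal.mem_span_singleton_self x) h1
        rw [← Submodule.mul_smul, mul_comm, Submodule.mul_smul] at this
        refine smul_mono_right _ (le_trans (Submodule.smul_mono_left ?_) hN) this
        rw [Ideal.ofList_cons]; exact le_sup_left
      refine ⟨w1, ?_, w2, ?_, rfl⟩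
      · refine ihl hl1 _ _ hN' y hy w1 hw1 ?_
        have : y • w1 = x • (v - y • w2) + u := by rw [e1]; abel
        rw [this]; exact add_mem h2 hu
      · refine ihn _ hw2 ?_
        have h3 := pow_succ_smul_le (ofList_le_cons l x) hN n h1
        have : y • w2 = v - (v - y • w2) := by abel
        rw [this]; exact sub_mem hv h3

/-- relative length -/
noncomputable def rlen (P Q : Submodule A M) : ℕ∞ := Module.length A (P ⧸ Q.submoduleOf P)

lemma rlen_eq {M' : Type*} [AddCommGroup M'] [Module A M'] (f : M →ₗ[A] M')
    (P Q : Submodule A M) (P' Q' : Submodule A M')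
    (h1 : ∀ w ∈ P, f w ∈ P') (h2 : ∀ w ∈ P, (f w ∈ Q' ↔ w ∈ Q))
    (h3 : ∀ z ∈ P', ∃ w ∈ P, z - f w ∈ Q') : rlen P' Q' = rlen P Q := by
  let φ : P →ₗ[A] P' ⧸ Q'.submoduleOf P' := (Submodule.mkQ _).comp (f.restrict h1)
  have hk : LinearMap.ker φ = Q.submoduleOf P := by
    ext ⟨w, hw⟩
    simp only [φ, LinearMap.mem_ker, LinearMap.comp_apply, Submodule.mkQ_apply,
      Submodule.Quotient.mk_eq_zero]
    exact h2 w hw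
  have hs : Surjective φ := by
    intro z
    obtain ⟨⟨z, hz⟩, rfl⟩ := Submodule.mkQ_surjective _ z
    obtain ⟨w, hw, hzw⟩ := h3 z hz
    refine ⟨⟨w, hw⟩, ?_⟩
    simp only [φ, LinearMap.comp_apply, Submodule.mkQ_apply]
    symm
    rw [Submodule.Quotient.eq]
    exact hzw
  have e := φ.quotKerEquivOfSurjective hs
  rw [hk] at e
  exact e.length_eq.symm

lemma rlen_add (P T Q : Submodule A M) (h1 : Q ≤ T) (h2 : T ≤ P) :
    rlen P Q = rlen P T + rlen T Q := by
  let f : (T ⧸ Q.submoduleOf T) →ₗ[A] (P ⧸ Q.submoduleOf P) :=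
    Submodule.mapQ _ _ (Submodule.inclusion h2) (by intro w hw; exact hw)
  let g : (P ⧸ Q.submoduleOf P) →ₗ[A] (P ⧸ T.submoduleOf P) :=
    Submodule.mapQ _ _ LinearMap.id (by intro w hw; exact h1 hw)
  have hf : Injective f := by
    rw [← LinearMap.ker_eq_bot, LinearMap.ker_eq_bot']
    intro z hz
    obtain ⟨z, rfl⟩ := Submodule.mkQ_surjective _ z
    exact (Submodule.Quotient.mk_eq_zero _).mpr ((Submodule.Quotient.mk_eq_zero (Q.submoduleOf P)).mp hz)
  have hg : Surjective g := by
    intro z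
    obtain ⟨z, rfl⟩ := Submodule.mkQ_surjective _ z
    exact ⟨Submodule.mkQ _ z, rfl⟩
  have hfg : Exact f g := by
    intro z
    obtain ⟨z, rfl⟩ := Submodule.mkQ_surjective _ z
    constructor
    · intro hz
      exact ⟨Submodule.mkQ _ ⟨z.1, (Submodule.Quotient.mk_eq_zero (T.submoduleOf P)).mp hz⟩, rfl⟩
    · rintro ⟨t, ht⟩
      obtain ⟨t, rfl⟩ := Submodule.mkQ_surjective _ t
      rw [← ht]
      exact (Submodule.Quotient.mk_eq_zero (T.submoduleOf P)).mpr t.2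
  rw [add_comm]
  exact Module.length_eq_add_of_exact f g hf hg hfg

lemma rlen_self_le (P Q : Submodule A M) (h : P ≤ Q) : rlen P Q = 0 := by
  apply Module.length_eq_zero_iff.mpr
  rw [Submodule.Quotient.subsingleton_iff]
  exact eq_top_iff.mpr fun z _ => h z.2

lemma rlen_top (Q : Submodule A M) : rlen ⊤ Q = Module.length A (M ⧸ Q) := by
  let f : (M ⧸ Q) →ₗ[A] ((⊤ : Submodule A M) ⧸ Q.submoduleOf ⊤) :=
    Submodule.mapQ _ _ (Submodule.topEquiv.symm.toLinearMap) (by intro w hw; exact hw)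
  refine (LinearEquiv.ofBijective f ⟨?_, ?_⟩).length_eq.symm
  · rw [← LinearMap.ker_eq_bot, LinearMap.ker_eq_bot']
    intro z hz
    obtain ⟨z, rfl⟩ := Submodule.mkQ_surjective _ z
    exact (Submodule.Quotient.mk_eq_zero _).mpr ((Submodule.Quotient.mk_eq_zero (Q.submoduleOf ⊤)).mp hz)
  · intro z
    obtain ⟨z, rfl⟩ := Submodule.mkQ_surjective _ z
    exact ⟨Submodule.mkQ _ z, rfl⟩

lemma rlen_filt (l : List A) (hl : QReg M l) (n : ℕ) (N : Submodule A M)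
    (hN : Ideal.ofList l • ⊤ ≤ N) :
    rlen (Ideal.ofList l ^ n • ⊤) (Ideal.ofList l ^ n • N) =
      (Nat.multichoose l.length n : ℕ∞) * rlen ⊤ N := by
  induction l generalizing n with
  | nil =>
    cases n with
    | zero => simp
    | succ n => rw [rlen_self_le _ _ (by simp)]; simp
  | cons x l ihl =>
    obtain ⟨hl1, hl2⟩ := hl
    have hN' : Ideal.ofList l • ⊤ ≤ N :=
      (Submodule.smul_mono_left (ofList_le_cons l x)).trans hN
    have hx := reg_pow_of (M := M) l x
      (fun n w hw h => reg_filt l hl1 n _ le_rfl x hl2 w hw h)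
    induction n with
    | zero => simp
    | succ n ihn =>
      rw [List.length_cons, Nat.multichoose_succ_succ, Nat.cast_add, add_mul, ← ihl hl1 _ hN']
      rw [List.length_cons] at ihn
      rw [← ihn]
      have hstep : ∀ v ∈ (Ideal.ofList (x :: l) ^ n • ⊤ : Submodule A M),
          x • v ∈ (Ideal.ofList (x :: l) ^ (n + 1) • ⊤ : Submodule A M) := by
        intro v hv
        rw [pow_succ', Submodule.mul_smul]
        exact Submodule.smul_mem_smul (mem_ofList_cons l x) hv
      have hxN : ∀ v ∈ (Ideal.ofList l ^ (n + 1) • ⊤ : Submodule A M),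
          x • v ∈ Ideal.ofList l ^ (n + 1) • N := by
        intro v hv
        have : x • v ∈ Ideal.span {x} • (Ideal.ofList l ^ (n + 1) • ⊤ : Submodule A M) :=
          Submodule.smul_mem_smul (Ideal.mem_span_singleton_self x) hv
        rw [← Submodule.mul_smul, mul_comm, Submodule.mul_smul] at this
        refine smul_mono_right _ (le_trans (Submodule.smul_mono_left ?_) hN) this
        rw [Ideal.ofList_cons]; exact le_sup_left
      set T : Submodule A M := Ideal.ofList (x :: l) ^ (n + 1) • N ⊔
        (Ideal.ofList (x :: l) ^ n • ⊤ : Submodule A M).map (LinearMap.lsmul A M x) with hT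
      have hT1 : Ideal.ofList (x :: l) ^ (n + 1) • N ≤ T := le_sup_left
      have hT2 : T ≤ Ideal.ofList (x :: l) ^ (n + 1) • ⊤ := by
        apply sup_le (smul_mono_right _ le_top)
        rintro _ ⟨v, hv, rfl⟩
        exact hstep v hv
      rw [rlen_add _ T _ hT1 hT2]
      congr 1
      · refine rlen_eq LinearMap.id _ _ _ _ ?_ ?_ ?_
        · intro w hw
          exact Submodule.smul_mono_left (Ideal.pow_right_mono (ofList_le_cons l x) _) hw
        · intro w hw
          simp only [LinearMap.id_apply]
          constructor
          · intro h
            obtain ⟨p, hp, q, ⟨v, hv, rfl⟩, hpq⟩ := Submodule.mem_sup.mp h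
            rw [mem_cons_pow] at hp
            obtain ⟨u, hu, v', hv', rfl⟩ := hp
            simp only [LinearMap.lsmul_apply] at hpq
            have e : x • (v' + v) = w - u := by rw [← hpq, smul_add]; abel
            have h1 : v' + v ∈ (Ideal.ofList l ^ (n + 1) • ⊤ : Submodule A M) := by
              apply hx
              rw [e]
              exact sub_mem hw (smul_top_of_mem hu)
            have h2 := hxN _ h1
            have : w = x • (v' + v) + u := by rw [e]; abel
            rw [this]; exact add_mem h2 hu
          · intro h
            exact hT1 (Submodule.smul_mono_left (Ideal.pow_right_mono (ofList_le_cons l x) _) h)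
        · intro z hz
          rw [mem_cons_pow] at hz
          obtain ⟨u, hu, v, hv, rfl⟩ := hz
          refine ⟨u, hu, ?_⟩
          rw [LinearMap.id_apply, add_sub_cancel_left]
          exact Submodule.mem_sup_right ⟨v, hv, rfl⟩
      · refine rlen_eq (LinearMap.lsmul A M x) _ _ _ _ ?_ ?_ ?_
        · intro w hw
          exact Submodule.mem_sup_right ⟨w, hw, rfl⟩
        · intro w hw
          simp only [LinearMap.lsmul_apply]
          constructor
          · intro h
            rw [mem_cons_pow] at h
            obtain ⟨u, hu, v, hv, huv⟩ := h
            have h1 : w - v ∈ (Ideal.ofList l ^ (n + 1) • ⊤ : Submodule A M) := by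
              apply hx
              rw [smul_sub, ← huv, add_sub_cancel_right]
              exact smul_top_of_mem hu
            have h3 := pow_succ_smul_le (ofList_le_cons l x) hN n h1
            have : w = w - v + v := by abel
            rw [this]; exact add_mem h3 hv
          · intro h
            rw [mem_cons_pow]
            exact ⟨0, zero_mem _, w, h, by simp⟩
        · intro z hz
          obtain ⟨p, hp, q, ⟨v, hv, rfl⟩, rfl⟩ := Submodule.mem_sup.mp hz
          exact ⟨v, hv, by simpa using hp⟩

lemma rlen_pow (l : List A) (hl : QReg M l) (n : ℕ) :
    rlen (⊤ : Submodule A M) (Ideal.ofList l ^ (n + 1) • ⊤) =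
      (Nat.multichoose (l.length + 1) n : ℕ∞) * rlen ⊤ (Ideal.ofList l • ⊤ : Submodule A M) := by
  induction n with
  | zero => simp
  | succ n ih =>
    rw [rlen_add _ (Ideal.ofList l ^ (n + 1) • ⊤) _
      (Submodule.smul_mono_left (Ideal.pow_le_pow_right (Nat.le_succ _))) le_top, ih,
      Nat.multichoose_succ_succ, Nat.cast_add, add_mul, add_comm]
    congr 1
    rw [← rlen_filt l hl _ _ le_rfl, ← Submodule.mul_smul, ← pow_succ]

/-- key length formula. -/
lemma rlen_key (l : List A) (hl : QReg M l) (n : ℕ) (N : Submodule A M)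
    (hN : Ideal.ofList l • ⊤ ≤ N) :
    rlen ⊤ N + rlen N (Ideal.ofList l ^ (n + 1) • N) =
      (Nat.multichoose (l.length + 1) n : ℕ∞) * rlen ⊤ (Ideal.ofList l • ⊤ : Submodule A M) +
      (Nat.multichoose l.length (n + 1) : ℕ∞) * rlen ⊤ N := by
  rw [← rlen_add _ N _ Submodule.smul_le_right le_top, ← rlen_pow l hl, ← rlen_filt l hl _ _ hN]
  exact rlen_add _ _ _ (smul_mono_right _ le_top) le_top

end Filtration


section Comb

lemma multichoose_unique (d : ℕ) (c : ℕ → ℤ) (N : ℕ)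
    (h : ∀ n ≥ N, ∑ j ∈ Finset.range (d + 1), c j * (Nat.multichoose n j : ℤ) = 0) :
    ∀ j ≤ d, c j = 0 := by
  induction d generalizing c N with
  | zero =>
    intro j hj
    obtain rfl : j = 0 := by omega
    simpa using h N le_rfl
  | succ d ih =>
    have h1 : ∀ j ≤ d, c (j + 1) = 0 := by
      apply ih (fun j => c (j + 1)) (N + 1)
      intro n hn
      obtain ⟨n, rfl⟩ : ∃ m, n = m + 1 := ⟨n - 1, by omega⟩
      have e1 := h n (by omega)
      have e2 := h (n + 1) (by omega)
      rw [Finset.sum_range_succ'] at e1 e2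
      have : ∑ j ∈ Finset.range (d + 1), c (j + 1) * (Nat.multichoose (n + 1) j : ℤ) =
          ∑ j ∈ Finset.range (d + 1), c (j + 1) * (Nat.multichoose (n + 1) (j + 1) : ℤ) -
          ∑ j ∈ Finset.range (d + 1), c (j + 1) * (Nat.multichoose n (j + 1) : ℤ) := by
        rw [← Finset.sum_sub_distrib]
        apply Finset.sum_congr rfl
        intro j _
        rw [Nat.multichoose_succ_succ]; push_cast; ring
      rw [this]
      simp at e1 e2
      linarith
    intro j hj
    cases j with
    | zero =>
      have e1 := h N le_rfl
      rw [Finset.sum_range_succ', Finset.sum_eq_zero] at e1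
      · simpa using e1
      · intro j hj
        rw [h1 j (by simp at hj; omega), zero_mul]
    | succ j => exact h1 j (by omega)

lemma multichoose_hockey (n d : ℕ) :
    ∑ j ∈ Finset.range (d + 1), Nat.multichoose n j = Nat.multichoose (n + 1) d := by
  induction d with
  | zero => simp
  | succ d ih => rw [Finset.sum_range_succ, ih, Nat.multichoose_succ_succ, add_comm]

lemma coeffs_of_eq (d : ℕ) (hd : 2 ≤ d) (e : ℕ → ℤ) (l0 lL : ℤ) (N : ℕ)
    (h : ∀ n ≥ N, (∑ i ∈ Finset.range (d + 1),
        (-1 : ℤ) ^ i * e i * ((n + 1 + d - 1 - i).choose (d - i) : ℤ)) + lL =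
      (Nat.multichoose (d + 1) n : ℤ) * l0 + (Nat.multichoose d (n + 1) : ℤ) * lL) :
    (∀ i, 1 ≤ i → i ≤ d - 1 → e i = (-1 : ℤ) ^ i * lL) ∧ e d = 0 := by
  let c : ℕ → ℤ := fun j => (-1) ^ (d - j) * e (d - j) -
    (if j = d then l0 else lL) + (if j = 0 then lL else 0)
  have hc : ∀ j ≤ d, c j = 0 := by
    apply multichoose_unique d c (N + 1)
    intro n hn
    obtain ⟨n, rfl⟩ : ∃ m, n = m + 1 := ⟨n - 1, by omega⟩
    have h0 := h n (by omega)
    rw [← Finset.sum_range_reflect] at h0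
    have e1 : ∑ j ∈ Finset.range (d + 1), (-1 : ℤ) ^ (d + 1 - 1 - j) * e (d + 1 - 1 - j) *
        ((n + 1 + d - 1 - (d + 1 - 1 - j)).choose (d - (d + 1 - 1 - j)) : ℤ) =
        ∑ j ∈ Finset.range (d + 1), (-1 : ℤ) ^ (d - j) * e (d - j) *
          (Nat.multichoose (n + 1) j : ℤ) := by
      apply Finset.sum_congr rfl
      intro j hj
      simp at hj
      rw [Nat.multichoose_eq, show n + 1 + d - 1 - (d + 1 - 1 - j) = n + 1 + j - 1 by omega,
        show d - (d + 1 - 1 - j) = j by omega, show d + 1 - 1 - j = d - j by omega]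
    rw [e1] at h0
    have e2 : ∑ j ∈ Finset.range (d + 1), c j * (Nat.multichoose (n + 1) j : ℤ) =
        ∑ j ∈ Finset.range (d + 1), (-1 : ℤ) ^ (d - j) * e (d - j) *
          (Nat.multichoose (n + 1) j : ℤ) -
        ∑ j ∈ Finset.range (d + 1), (if j = d then l0 else lL) * (Nat.multichoose (n + 1) j : ℤ) +
        ∑ j ∈ Finset.range (d + 1), (if j = 0 then lL else 0) * (Nat.multichoose (n + 1) j : ℤ) := by
      rw [← Finset.sum_sub_distrib, ← Finset.sum_add_distrib]
      apply Finset.sum_congr rfl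
      intro j _
      simp only [c]; ring
    have e3 : ∑ j ∈ Finset.range (d + 1),
        (if j = 0 then lL else 0) * (Nat.multichoose (n + 1) j : ℤ) = lL := by
      simp [ite_mul]
    have e4 : ∑ j ∈ Finset.range (d + 1),
        (if j = d then l0 else lL) * (Nat.multichoose (n + 1) j : ℤ) =
        (Nat.multichoose (d + 1) n : ℤ) * l0 + (Nat.multichoose d (n + 1) : ℤ) * lL := by
      rw [Finset.sum_range_succ, if_pos rfl]
      have : ∑ j ∈ Finset.range d, (if j = d then l0 else lL) * (Nat.multichoose (n + 1) j : ℤ) =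
          lL * ((∑ j ∈ Finset.range d, Nat.multichoose (n + 1) j : ℕ) : ℤ) := by
        rw [Nat.cast_sum, Finset.mul_sum]
        apply Finset.sum_congr rfl
        intro j hj
        simp at hj
        rw [if_neg (by omega)]
      rw [this]
      obtain ⟨k, rfl⟩ : ∃ k, d = k + 1 := ⟨d - 1, by omega⟩
      rw [multichoose_hockey]
      have f1 : Nat.multichoose (n + 1 + 1) k = Nat.multichoose (k + 1) (n + 1) := by
        rw [Nat.multichoose_eq, Nat.multichoose_eq, ← Nat.choose_symm_of_eq_add]
        · congr 1; omega
        · omega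
      have f2 : Nat.multichoose (n + 1) (k + 1) = Nat.multichoose (k + 1 + 1) n := by
        rw [Nat.multichoose_eq, Nat.multichoose_eq, ← Nat.choose_symm_of_eq_add]
        · congr 1; omega
        · omega
      rw [f1, f2]; ring
    rw [e2, e3, e4]
    linarith
  have hsq : ∀ i : ℕ, (-1 : ℤ) ^ i * (-1) ^ i = 1 := by
    intro i; rw [← mul_pow]; simp
  constructor
  · intro i h1 h2
    have := hc (d - i) (by omega)
    simp only [c] at this
    rw [show d - (d - i) = i by omega, if_neg (by omega), if_neg (by omega)] at this
    have : (-1 : ℤ) ^ i * e i = lL := by linarith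
    rw [← this, ← mul_assoc, hsq, one_mul]
  · have := hc 0 (by omega)
    simp only [c] at this
    rw [if_neg (by omega)] at this
    simp only [if_true, Nat.sub_zero] at this
    have : (-1 : ℤ) ^ d * e d = 0 := by linarith
    have h2 := hsq d
    calc e d = ((-1) ^ d * (-1) ^ d) * e d := by rw [h2, one_mul]
      _ = (-1) ^ d * ((-1) ^ d * e d) := by ring
      _ = 0 := by rw [this, mul_zero]

end Comb


section Depth

set_option linter.unusedSectionVars false

open RingTheory.Sequence
open scoped Pointwise

variable {A : Type u} [CommRing A] [IsLocalRing A] [IsNoetherianRing A]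

def HasDepth (M : Type u) [AddCommGroup M] [Module A M] (n : ℕ) : Prop :=
  ∃ rs : List A, rs.length = n ∧ (∀ r ∈ rs, r ∈ maximalIdeal A) ∧ IsWeaklyRegular M rs

lemma smul_top_lt (M : Type u) [AddCommGroup M] [Module A M] [Module.Finite A M] [Nontrivial M] :
    maximalIdeal A • (⊤ : Submodule A M) < ⊤ := by
  apply lt_of_le_of_ne le_top
  intro h
  exact Submodule.top_ne_ideal_smul_of_le_jacobson_annihilator
    ((IsLocalRing.maximalIdeal_le_jacobson _)) h.symm

open LinearMap Ideal Abelian Limits Pointwise IsSMulRegular in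
lemma HasDepth.exchange (M : Type u) [AddCommGroup M] [Module A M] [Module.Finite A M]
    [Nontrivial M] (n : ℕ) (h : HasDepth (A := A) M (n+1)) (y : A) (hy : y ∈ maximalIdeal A)
    (hreg : IsSMulRegular M y) : HasDepth (A := A) (QuotSMulTop y M) n := by
  obtain ⟨rs, hlen, hmem, hr⟩ := h
  have hr' : IsRegular M rs :=
    (IsLocalRing.isRegular_iff_isWeaklyRegular_of_subset_maximalIdeal hmem).2 hr
  have suppQ : Module.support A (A ⧸ maximalIdeal A) = PrimeSpectrum.zeroLocus (maximalIdeal A) := by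
    rw [Module.support_eq_zeroLocus, annihilator_quotient]
  have h1 := ModuleCat.subsingleton_ext_of_exists_isRegular (maximalIdeal A)
    (ModuleCat.of A (A ⧸ maximalIdeal A)) suppQ.subset (ModuleCat.of A M) (smul_top_lt M) rs
    hmem hr'
  have hnt : Nontrivial (QuotSMulTop y M) := nontrivial_quotSMulTop_of_mem_maximalIdeal M hy
  obtain ⟨rs', h1, h2, h3⟩ := ModuleCat.exists_isRegular_of_exists_subsingleton_ext (maximalIdeal A) n
    (ModuleCat.of A (QuotSMulTop y M)) (smul_top_lt _) (ModuleCat.of A (A ⧸ maximalIdeal A)) suppQ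
    (by
      intro i hi
      have zero1 := AddCommGrpCat.isZero_of_iff_subsingleton.mpr (h1 i (by omega))
      have zero2 := AddCommGrpCat.isZero_of_iff_subsingleton.mpr (h1 (i + 1) (by omega))
      exact AddCommGrpCat.subsingleton_of_isZero <| ShortComplex.Exact.isZero_of_both_zeros
        ((Ext.covariant_sequence_exact₃' (ModuleCat.of A (A ⧸ maximalIdeal A)) 
          (IsSMulRegular.smulShortComplex_shortExact (M := ModuleCat.of A M) hreg)) i (i + 1) rfl)
        (zero1.eq_zero_of_src _) (zero2.eq_zero_of_tgt _))
  exact ⟨rs', h1, h2, h3.1⟩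


lemma ass_step (M : Type u) [AddCommGroup M] [Module A M] [Module.Finite A M]
    (x : A) (hx : x ∈ maximalIdeal A) (hreg : IsSMulRegular M x) (P : Ideal A)
    (hP : P ∈ associatedPrimes A M) :
    ∃ Q ∈ associatedPrimes A (QuotSMulTop x M), P ≤ Q ∧ x ∈ Q := by
  obtain ⟨hPp, m0, hm0⟩ := Submodule.isAssociatedPrime_iff.1 hP
  let N : Submodule A M := Submodule.torsionBySet A M (P : Set A)
  have hmemN : ∀ w : M, w ∈ N ↔ ∀ p ∈ P, p • w = 0 := by
    intro w
    simp only [N, Submodule.mem_torsionBySet_iff]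
    exact ⟨fun h p hp => h ⟨p, hp⟩, fun h p => h p p.2⟩
  have hm0N : m0 ∈ N := by
    rw [hmemN]
    intro p hp
    rw [hm0, Submodule.mem_colon_singleton] at hp
    simpa using hp
  have hne : N ≠ ⊥ := by
    intro h
    have : m0 = 0 := by rw [h] at hm0N; simpa using hm0N
    apply hPp.ne_top
    rw [hm0, this, Ideal.eq_top_iff_one, Submodule.mem_colon_singleton]
    simp
  have hnot : ¬ ∀ w ∈ N, w ∈ (x • ⊤ : Submodule A M) := by
    intro h
    apply hne
    refine Submodule.eq_bot_of_le_smul_of_le_jacobson_bot (maximalIdeal A) N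
      (IsNoetherian.noetherian N) ?_ (IsLocalRing.maximalIdeal_le_jacobson _)
    intro w hw
    obtain ⟨v, -, rfl⟩ := (Submodule.mem_smul_pointwise_iff_exists _ _ _).1 (h w hw)
    refine Submodule.smul_mem_smul hx ?_
    rw [hmemN] at hw ⊢
    intro p hp
    apply hreg.right_eq_zero_of_smul
    rw [smul_comm]
    exact hw p hp
  push Not at hnot
  obtain ⟨w, hw, hwx⟩ := hnot
  have hw0 : (Submodule.Quotient.mk w : QuotSMulTop x M) ≠ 0 := by
    rwa [Ne, Submodule.Quotient.mk_eq_zero]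
  obtain ⟨Q, hQ, hle⟩ := exists_le_isAssociatedPrime_of_isNoetherianRing A _ hw0
  refine ⟨Q, hQ, fun p hp => hle ?_, hle ?_⟩
  · rw [Submodule.mem_colon_singleton, Submodule.mem_bot, ← Submodule.Quotient.mk_smul,
      (hmemN w).1 hw p hp]; rfl
  · rw [Submodule.mem_colon_singleton, Submodule.mem_bot, ← Submodule.Quotient.mk_smul,
      Submodule.Quotient.mk_eq_zero]
    exact Submodule.smul_mem_pointwise_smul _ _ _ trivial

lemma not_mem_ass (M : Type u) [AddCommGroup M] [Module A M] 
    (x : A) (hreg : IsSMulRegular M x) (P : Ideal A)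
    (hP : P ∈ associatedPrimes A M) : x ∉ P := by
  intro h
  have := biUnion_associatedPrimes_eq_compl_regular A M
  have h2 : x ∈ ⋃ p ∈ associatedPrimes A M, (p : Set A) := Set.mem_biUnion hP h
  rw [this] at h2
  exact h2 hreg

lemma reg_of_not_mem_ass (M : Type u) [AddCommGroup M] [Module A M] 
    (x : A) (h : ∀ P ∈ associatedPrimes A M, x ∉ P) : IsSMulRegular M x := by
  by_contra hreg
  have := biUnion_associatedPrimes_eq_compl_regular A M
  have h2 : x ∈ ⋃ p ∈ associatedPrimes A M, (p : Set A) := by rw [this]; exact hreg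
  obtain ⟨P, hP, h3⟩ := Set.mem_iUnion₂.1 h2
  exact h P hP h3

lemma ass_dim (n : ℕ) : ∀ (M : Type u) [AddCommGroup M] [Module A M] [Module.Finite A M]
    (P : Ideal A) (_ : P ∈ associatedPrimes A M) (_ : HasDepth (A := A) M n),
    (n : WithBot ℕ∞) ≤ ringKrullDim (A ⧸ P) := by
  induction n with
  | zero =>
    intro M _ _ _ P hP _
    have := hP.1
    have : Nontrivial (A ⧸ P) := Ideal.Quotient.nontrivial_iff.2 hP.1.ne_top
    simpa using ringKrullDim_nonneg_of_nontrivial (R := A ⧸ P)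
  | succ n ih =>
    intro M _ _ _ P hP ⟨rs, hlen, hmem, hr⟩
    match rs, hlen with
    | x :: t, hlen =>
      rw [isWeaklyRegular_cons_iff] at hr
      have hx := hmem x (by simp)
      obtain ⟨Q, hQ, hPQ, hxQ⟩ := ass_step M x hx hr.1 P hP
      have h1 := ih (QuotSMulTop x M) Q hQ
        ⟨t, by simpa using hlen, fun r hr => hmem r (by simp [hr]), hr.2⟩
      have hxP := not_mem_ass M x hr.1 P hP
      have := hP.1
      have h2 := ringKrullDim_succ_le_of_surjective (Ideal.Quotient.factor hPQ)
        (Ideal.Quotient.factor_surjective hPQ) (r := Ideal.Quotient.mk P x)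
        (mem_nonZeroDivisors_of_ne_zero (by rwa [Ne, Ideal.Quotient.eq_zero_iff_mem]))
        (by simpa [Ideal.Quotient.eq_zero_iff_mem] using hxQ)
      refine le_trans ?_ h2
      push_cast
      gcongr

lemma dim_le_of_sop (I : Ideal A) (l : List A) (hl : ∀ r ∈ l, r ∈ maximalIdeal A)
    (hC : ∀ P : Ideal A, P.IsPrime → I ≤ P → (∀ r ∈ l, r ∈ P) → maximalIdeal A ≤ P) :
    ringKrullDim (A ⧸ I) ≤ (l.length : WithBot ℕ∞) := by
  classical
  rcases eq_or_ne I ⊤ with rfl | hI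
  · rw [ringKrullDim_eq_bot_of_subsingleton]; exact bot_le
  have : Nontrivial (A ⧸ I) := Ideal.Quotient.nontrivial_iff.2 hI
  have : IsLocalRing (A ⧸ I) := .of_surjective' _ Ideal.Quotient.mk_surjective
  rw [← IsLocalRing.maximalIdeal_height_eq_ringKrullDim]
  let s : Finset (A ⧸ I) := (l.map (Ideal.Quotient.mk I)).toFinset
  have hs : s.card ≤ l.length := (List.toFinset_card_le _).trans (by simp)
  have key : ∀ q : Ideal (A ⧸ I), q.IsPrime → Ideal.span (s : Set (A ⧸ I)) ≤ q →
      maximalIdeal (A ⧸ I) ≤ q := by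
    intro q hq hsq
    have h1 := hC (q.comap (Ideal.Quotient.mk I)) (Ideal.comap_isPrime _ _)
      (by intro a ha; simp [Ideal.mem_comap, Ideal.Quotient.eq_zero_iff_mem.2 ha])
      (by
        intro r hr
        rw [Ideal.mem_comap]
        apply hsq
        apply Ideal.subset_span
        simp only [s, List.coe_toFinset, List.mem_map, Set.mem_ofPred_eq]
        exact ⟨r, hr, rfl⟩)
    intro y hy
    obtain ⟨a, rfl⟩ := Ideal.Quotient.mk_surjective y
    refine h1 (x := a) ?_
    rw [IsLocalRing.mem_maximalIdeal] at hy ⊢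
    exact fun hu => hy (hu.map _)
  have hsm : Ideal.span (s : Set (A ⧸ I)) ≤ maximalIdeal (A ⧸ I) := by
    rw [Ideal.span_le]
    intro y hy
    simp only [s, List.coe_toFinset, List.mem_map, Set.mem_ofPred_eq] at hy
    obtain ⟨r, hr, rfl⟩ := hy
    have : IsLocalHom (Ideal.Quotient.mk I) :=
      IsLocalHom.of_surjective _ Ideal.Quotient.mk_surjective
    have h1 := hl r hr
    rw [SetLike.mem_coe, IsLocalRing.mem_maximalIdeal] at *
    exact fun hu => h1 (isUnit_of_map_unit _ _ hu)
  have hmin : maximalIdeal (A ⧸ I) ∈ (Ideal.span (s : Set (A ⧸ I))).minimalPrimes :=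
    ⟨⟨inferInstance, hsm⟩, fun q hq _ => key q hq.1 hq.2⟩
  have := Ideal.height_le_card_of_mem_minimalPrimes_span_finset hmin
  have h3 : (maximalIdeal (A ⧸ I)).height ≤ (l.length : ℕ∞) := this.trans (by exact_mod_cast hs)
  exact_mod_cast h3

lemma sop_regular (l : List A) : ∀ (M : Type u) [AddCommGroup M] [Module A M] [Module.Finite A M]
    [Nontrivial M]
    (_ : HasDepth (A := A) M l.length) (_ : ∀ r ∈ l, r ∈ maximalIdeal A)
    (_ : ∀ P : Ideal A, P.IsPrime → Module.annihilator A M ≤ P → (∀ r ∈ l, r ∈ P) →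
      maximalIdeal A ≤ P), IsWeaklyRegular M l := by
  induction l with
  | nil => intro M _ _ _ _ _ _ _; exact IsWeaklyRegular.nil A M
  | cons x t ih =>
    intro M _ _ _ _ hdep hl hC
    have hreg : IsSMulRegular M x := by
      apply reg_of_not_mem_ass
      intro P hP hxP
      have h1 := ass_dim _ M P hP hdep
      have h2 := dim_le_of_sop P t (fun r hr => hl r (by simp [hr])) (by
        intro Q hQ hPQ hr
        refine hC Q hQ ((Submodule.annihilator_top (R := A) (M := M)).symm.le.trans ((IsAssociatedPrime.annihilator_le hP).trans hPQ)) ?_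
        intro r hr'
        rcases List.mem_cons.1 hr' with rfl | h
        · exact hPQ hxP
        · exact hr r h)
      have h3 := h1.trans h2
      rw [List.length_cons] at h3
      norm_cast at h3
      omega
    have := nontrivial_quotSMulTop_of_mem_maximalIdeal M (hl x (by simp))
    rw [isWeaklyRegular_cons_iff]
    refine ⟨hreg, ih _ (HasDepth.exchange M _ hdep x (hl x (by simp)) hreg)
      (fun r hr => hl r (by simp [hr])) ?_⟩
    intro P hP hann hr
    apply hC P hP
    · refine le_trans ?_ hann
      exact LinearMap.annihilator_le_of_surjective (Submodule.mkQ _) (Submodule.mkQ_surjective _)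
    · intro r hr'
      rcases List.mem_cons.1 hr' with rfl | h
      · exact hann (QuotSMulTop.mem_annihilator _ _)
      · exact hr r h

end Depth


section RegLocal

set_option linter.unusedSectionVars false

open RingTheory.Sequence
open scoped Pointwise

lemma dim_cancel {b : WithBot ℕ∞} (n k : ℕ) (h : ((n + k : ℕ) : WithBot ℕ∞) ≤ b + ((k : ℕ∞) : WithBot ℕ∞)) :
    (n : WithBot ℕ∞) ≤ b := by
  induction b with
  | bot =>
    rw [WithBot.bot_add, le_bot_iff] at h
    exact absurd h (WithBot.coe_ne_bot (a := ((n + k : ℕ) : ℕ∞)))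
  | coe b =>
    induction b with
    | top => exact le_top
    | coe b =>
      norm_cast at h ⊢
      omega

lemma mk_mem_max {A : Type u} [CommRing A] [IsLocalRing A] (I : Ideal A) [IsLocalRing (A ⧸ I)]
    (r : A) : Ideal.Quotient.mk I r ∈ maximalIdeal (A ⧸ I) ↔ r ∈ maximalIdeal A := by
  have : IsLocalHom (Ideal.Quotient.mk I) :=
    IsLocalHom.of_surjective _ Ideal.Quotient.mk_surjective
  rw [IsLocalRing.mem_maximalIdeal, IsLocalRing.mem_maximalIdeal, mem_nonunits_iff,
    mem_nonunits_iff, not_iff_not]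
  exact ⟨fun hu => isUnit_of_map_unit _ _ hu, fun hu => hu.map _⟩

lemma lift_list {A : Type u} [CommRing A] [IsLocalRing A] (I : Ideal A) [IsLocalRing (A ⧸ I)]
    (rs : List (A ⧸ I)) (h : ∀ r ∈ rs, r ∈ maximalIdeal (A ⧸ I)) :
    ∃ l : List A, (∀ r ∈ l, r ∈ maximalIdeal A) ∧ l.map (Ideal.Quotient.mk I) = rs := by
  induction rs with
  | nil => exact ⟨[], by simp, rfl⟩
  | cons x t ih =>
    obtain ⟨l, h1, h2⟩ := ih (fun r hr => h r (by simp [hr]))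
    obtain ⟨y, hy⟩ := Ideal.Quotient.mk_surjective (I := I) x
    refine ⟨y :: l, ?_, by simp [hy, h2]⟩
    intro r hr
    rcases List.mem_cons.1 hr with rfl | hr
    · rw [← mk_mem_max I, hy]; exact h x (by simp)
    · exact h1 r hr

lemma hasDepth_quot {A : Type u} [CommRing A] [IsLocalRing A] (I : Ideal A) [IsLocalRing (A ⧸ I)]
    (rs : List (A ⧸ I)) (h : ∀ r ∈ rs, r ∈ maximalIdeal (A ⧸ I))
    (hr : IsWeaklyRegular (A ⧸ I) rs) : HasDepth (A := A) (A ⧸ I) rs.length := by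
  obtain ⟨l, h1, h2⟩ := lift_list I rs h
  refine ⟨l, by rw [← h2]; simp, h1, ?_⟩
  rw [← isWeaklyRegular_map_algebraMap_iff (S := A ⧸ I)]
  rw [show l.map (algebraMap A (A ⧸ I)) = rs from h2]
  exact hr

lemma HasDepth.mono {A : Type u} [CommRing A] [IsLocalRing A] {M : Type u} [AddCommGroup M]
    [Module A M] {n k : ℕ} (h : HasDepth (A := A) M n) (hk : k ≤ n) : HasDepth (A := A) M k := by
  obtain ⟨rs, h1, h2, h3⟩ := h
  refine ⟨rs.take k, by simp; omega, fun r hr => h2 r (List.mem_of_mem_take hr), ?_⟩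
  rw [← List.take_append_drop k rs, isWeaklyRegular_append_iff] at h3
  exact h3.1

lemma reg_local (n : ℕ) : ∀ (A : Type u) [CommRing A] [IsLocalRing A] [IsNoetherianRing A]
    (s : Finset A) (_ : Ideal.span (s : Set A) = maximalIdeal A) (_ : s.card ≤ n)
    (_ : (n : WithBot ℕ∞) ≤ ringKrullDim A), IsDomain A ∧ HasDepth (A := A) A n := by
  classical
  induction n with
  | zero =>
    intro A _ _ _ s hs hc _
    have : s = ∅ := by simpa using hc
    subst this
    have hf : IsField A := by
      rw [IsLocalRing.isField_iff_maximalIdeal_eq, ← hs]; simp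
    exact ⟨hf.isDomain, ⟨[], rfl, by simp, .nil A A⟩⟩
  | succ n ih =>
    intro A _ _ _ s hs hc hdim
    -- the maximal ideal is not a minimal prime
    have hnotmin : ∀ Q ∈ minimalPrimes A, ¬ maximalIdeal A ≤ Q := by
      intro Q hQ hle
      have : maximalIdeal A ∈ minimalPrimes A := by
        have := hQ.1.1
        rwa [le_antisymm hle (IsLocalRing.le_maximalIdeal this.ne_top)]
      rw [← Ideal.height_eq_zero_iff] at this
      rw [← IsLocalRing.maximalIdeal_height_eq_ringKrullDim, this] at hdim
      norm_cast at hdim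
    have hx : ∃ x ∈ maximalIdeal A, x ∉ maximalIdeal A ^ 2 ∧ ∀ Q ∈ minimalPrimes A, x ∉ Q := by
      by_contra hcon
      push Not at hcon
      have hfin : (minimalPrimes A).Finite := minimalPrimes.finite_of_isNoetherianRing A
      let F : Finset (Ideal A) := insert (maximalIdeal A ^ 2) hfin.toFinset
      have h1 := (Ideal.subset_union_prime (s := F) (f := id) (maximalIdeal A ^ 2)
        (maximalIdeal A ^ 2) (I := maximalIdeal A) (by
          intro i hi h2 _
          simp only [F, Finset.mem_insert, h2, false_or, Set.Finite.mem_toFinset] at hi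
          exact hi.1.1)).1 (by
          intro x hx
          simp only [Set.mem_iUnion]
          by_cases h2 : x ∈ maximalIdeal A ^ 2
          · exact ⟨_, by simp [F], h2⟩
          · obtain ⟨Q, hQ, hxQ⟩ := hcon x hx h2
            exact ⟨Q, by simp [F, hQ], hxQ⟩)
      obtain ⟨Q, hQ, hle⟩ := h1
      simp only [F, Finset.mem_insert, Set.Finite.mem_toFinset] at hQ
      rcases hQ with rfl | hQ
      · have : maximalIdeal A = ⊥ := by
          refine Submodule.eq_bot_of_le_smul_of_le_jacobson_bot (maximalIdeal A) _
            (IsNoetherian.noetherian _) ?_ (IsLocalRing.maximalIdeal_le_jacobson _)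
          rw [smul_eq_mul, ← pow_two]; exact hle
        obtain ⟨Q, hQ⟩ := Ideal.nonempty_minimalPrimes (I := (⊥ : Ideal A)) bot_ne_top
        exact hnotmin Q hQ (by rw [this]; exact bot_le)
      · exact hnotmin Q hQ hle
    obtain ⟨x, hxm, hx2, hxQ⟩ := hx
    have hxs := hxm
    rw [← hs] at hxs
    obtain ⟨c, -, hcx⟩ := Submodule.mem_span_finset.1 hxs
    have hu : ∃ t ∈ s, IsUnit (c t) := by
      by_contra hcon
      push Not at hcon
      apply hx2
      rw [← hcx, pow_two]
      refine Ideal.sum_mem _ fun t ht => ?_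
      refine Ideal.mul_mem_mul ((IsLocalRing.mem_maximalIdeal _).2 (hcon t ht)) ?_
      rw [← hs]; exact Ideal.subset_span ht
    obtain ⟨t, hts, htu⟩ := hu
    have htmem : t ∈ Ideal.span (insert x (s.erase t : Set A)) := by
      rw [← Finset.add_sum_erase _ _ hts] at hcx
      have h1 : c t * t ∈ Ideal.span (insert x (s.erase t : Set A)) := by
        have : c t * t = x - ∑ a ∈ s.erase t, c a • a := by rw [← hcx]; simp
        rw [this]
        refine Ideal.sub_mem _ (Ideal.subset_span (by simp)) (Ideal.sum_mem _ fun a ha => ?_)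
        exact Ideal.mul_mem_left _ _ (Ideal.subset_span (Set.mem_insert_of_mem _ ha))
      exact (Ideal.unit_mul_mem_iff_mem _ htu).1 h1
    have hm : maximalIdeal A = Ideal.span (insert x (s.erase t : Set A)) := by
      apply le_antisymm
      · rw [← hs, Ideal.span_le]
        intro a ha
        by_cases hat : a = t
        · subst hat; exact htmem
        · exact Ideal.subset_span (by simp [hat]; right; exact ha)
      · rw [Ideal.span_le]
        intro a ha
        rcases Set.mem_insert_iff.1 ha with rfl | ha
        · exact hxm
        · rw [← hs]; exact Ideal.subset_span (Finset.mem_of_mem_erase ha)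
    let I := Ideal.span ({x} : Set A)
    have hIm : I ≤ maximalIdeal A := (Ideal.span_singleton_le_iff_mem _).2 hxm
    have hI : I ≠ ⊤ := fun h => (maximalIdeal.isMaximal A).ne_top (top_le_iff.1 (h ▸ hIm))
    have : Nontrivial (A ⧸ I) := Ideal.Quotient.nontrivial_iff.2 hI
    have : IsLocalRing (A ⧸ I) := .of_surjective' _ Ideal.Quotient.mk_surjective
    have hdim' : (n : WithBot ℕ∞) ≤ ringKrullDim (A ⧸ I) := by
      have h1 := ringKrullDim_le_ringKrullDim_quotient_add_encard ({x} : Set A)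
        (by rw [IsLocalRing.ringJacobson_eq_maximalIdeal]; simpa using hxm)
      rw [Set.encard_singleton] at h1
      exact dim_cancel n 1 (hdim.trans h1)
    obtain ⟨hdom, rs, hrl, hrm, hrr⟩ := ih (A ⧸ I) ((s.erase t).image (Ideal.Quotient.mk I)) (by
        apply le_antisymm
        · rw [Ideal.span_le]
          intro y hy
          simp only [Finset.coe_image, Set.mem_image] at hy
          obtain ⟨a, ha, rfl⟩ := hy
          rw [SetLike.mem_coe, mk_mem_max, hm]
          exact Ideal.subset_span (Set.mem_insert_of_mem _ ha)
        · intro y hy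
          obtain ⟨a, rfl⟩ := Ideal.Quotient.mk_surjective y
          rw [mk_mem_max, hm, Ideal.span_insert] at hy
          obtain ⟨b, hb, b', hb', rfl⟩ := Submodule.mem_sup.1 hy
          rw [map_add, Ideal.Quotient.eq_zero_iff_mem.2 hb, zero_add, Finset.coe_image,
            ← Ideal.map_span]
          exact Ideal.mem_map_of_mem _ hb')
      (Finset.card_image_le.trans (by rw [Finset.card_erase_of_mem hts]; omega)) hdim'
    have hprime : I.IsPrime := (Ideal.Quotient.isDomain_iff_prime I).1 hdom
    obtain ⟨Q, hQ, hQI⟩ := Ideal.exists_minimalPrimes_le (bot_le : ⊥ ≤ I)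
    have hQp := hQ.1.1
    have hQbot : Q = ⊥ := by
      refine Submodule.eq_bot_of_le_smul_of_le_jacobson_bot (maximalIdeal A) _
            (IsNoetherian.noetherian _) ?_ (IsLocalRing.maximalIdeal_le_jacobson _)
      intro q hq
      obtain ⟨b, rfl⟩ := Ideal.mem_span_singleton'.1 (hQI hq)
      rw [mul_comm]
      refine Submodule.smul_mem_smul hxm ((hQp.mem_or_mem hq).resolve_right (hxQ Q hQ))
    have hdA : IsDomain A := by
      rw [hQbot] at hQp
      exact IsDomain.of_bot_isPrime A
    have hx0 : x ≠ 0 := fun h => hxQ Q hQ (h ▸ Q.zero_mem)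
    refine ⟨hdA, ?_⟩
    obtain ⟨l, h1, h2, h3⟩ := hasDepth_quot I rs hrm hrr
    refine ⟨x :: l, by simp [h1, hrl], ?_, ?_⟩
    · intro r hr
      rcases List.mem_cons.1 hr with rfl | hr
      · exact hxm
      · exact h2 r hr
    · rw [isWeaklyRegular_cons_iff]
      refine ⟨?_, ?_⟩
      · exact IsSMulRegular.of_ne_zero hx0
      · have e : I = x • (⊤ : Ideal A) := by
          simp [← Submodule.ideal_span_singleton_smul, I]
        exact ((Submodule.quotEquivOfEq _ _ e).isWeaklyRegular_congr l).1 h3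

end RegLocal


section DimQuot

set_option linter.unusedSectionVars false

open RingTheory.Sequence
open scoped Pointwise

lemma dim_add_le {S : Type u} [CommRing S] (I : Ideal S) (k : ℕ)
    (h : ∀ p : PrimeSpectrum S, I ≤ p.asIdeal → (k : ℕ∞) ≤ Order.height p) :
    ringKrullDim (S ⧸ I) + ((k : ℕ∞) : WithBot ℕ∞) ≤ ringKrullDim S := by
  rw [ringKrullDim_quotient, ringKrullDim]
  rcases isEmpty_or_nonempty (PrimeSpectrum.zeroLocus (R := S) I) with he | he
  · rw [Order.krullDim_eq_bot, WithBot.bot_add]; exact bot_le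
  · have : Nonempty (PrimeSpectrum S) := ⟨he.some.1⟩
    rw [Order.krullDim_eq_iSup_coheight_of_nonempty,
      Order.krullDim_eq_iSup_height_add_coheight_of_nonempty, ← WithBot.coe_add,
      WithBot.coe_le_coe, ENat.iSup_add]
    refine iSup_le fun p => ?_
    refine le_trans ?_ (le_iSup (fun a : PrimeSpectrum S => Order.height a + Order.coheight a) p.1)
    rw [add_comm]
    refine add_le_add (h p.1 p.2) ?_
    exact Order.coheight_le_coheight_apply_of_strictMono Subtype.val (fun a b h => h) p

lemma dim_quot_ge {S : Type u} [CommRing S] [IsLocalRing S] [IsNoetherianRing S] (n : ℕ)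
    (hdep : HasDepth (A := S) S n) (hdim : ringKrullDim S = n) (P : Ideal S) [P.IsPrime] (h : ℕ)
    (hP : P.height = h) : (n : WithBot ℕ∞) ≤ ringKrullDim (S ⧸ P) + ((h : ℕ∞) : WithBot ℕ∞) := by
  classical
  obtain ⟨J, hJP, hJr, hJh⟩ := Ideal.exists_spanRank_eq_and_height_eq P (Ideal.IsPrime.ne_top ‹_›)
  have hPmin : P ∈ J.minimalPrimes := Ideal.mem_minimalPrimes_of_height_le hJP hJh.ge
  rw [hP] at hJr hJh
  have hfin : J.generators.Finite := (IsNoetherian.noetherian J).finite_generators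
  set s := hfin.toFinset with hs
  have hspan : Ideal.span (s : Set S) = J := by
    rw [hs, hfin.coe_toFinset, Ideal.span, J.span_generators]
  have hcard : s.card = h := by
    rw [hs, ← Set.ncard_eq_toFinset_card (hs := hfin),
      (IsNoetherian.noetherian J).generators_ncard, Submodule.spanFinrank, hJr]
    simp
  have hPm : P ≤ maximalIdeal S := IsLocalRing.le_maximalIdeal (Ideal.IsPrime.ne_top ‹_›)
  have hJm := hJP.trans hPm
  have hJ : J ≠ ⊤ := fun h => (maximalIdeal.isMaximal S).ne_top (top_le_iff.1 (h ▸ hJm))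
  have : Nontrivial (S ⧸ J) := Ideal.Quotient.nontrivial_iff.2 hJ
  have : IsLocalRing (S ⧸ J) := .of_surjective' _ Ideal.Quotient.mk_surjective
  obtain ⟨s', hs'min, hs'card⟩ :=
    Ideal.exists_finset_card_eq_height_of_isNoetherianRing (maximalIdeal (S ⧸ J))
  have hdimJ : ringKrullDim (S ⧸ J) = ((s'.card : ℕ∞) : WithBot ℕ∞) := by
    rw [← IsLocalRing.maximalIdeal_height_eq_ringKrullDim, hs'card]
  obtain ⟨l', hl'm, hl'⟩ := lift_list J s'.toList (by
    intro r hr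
    exact hs'min.1.2 (Ideal.subset_span (by simpa using hr)))
  have hl'len : l'.length = s'.card := by
    rw [← Finset.length_toList, ← hl', List.length_map]
  have hle : h + s'.card ≤ n := by
    have h1 := dim_add_le J h (by
      intro p hp
      rw [← PrimeSpectrum.height_eq_orderHeight, ← hJh]
      exact Ideal.height_mono hp)
    rw [hdimJ, hdim] at h1
    norm_cast at h1
    omega
  have hof : Ideal.ofList s.toList = J := by
    rw [← hspan, Ideal.ofList]; congr 1; ext; simp
  have hreg : IsWeaklyRegular S (s.toList ++ l') := by
    apply sop_regular
    · apply hdep.mono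
      rw [List.length_append, Finset.length_toList, hcard, hl'len]
      exact hle
    · intro r hr
      rcases List.mem_append.1 hr with hr | hr
      · apply hJm; rw [← hspan]; exact Ideal.subset_span (by simpa using hr)
      · exact hl'm r hr
    · intro Q hQ _ hr
      have hJQ : J ≤ Q := by
        rw [← hspan, Ideal.span_le]
        intro a ha
        exact hr a (List.mem_append_left _ (by simpa using ha))
      have hQ' : (Q.map (Ideal.Quotient.mk J)).IsPrime :=
        Ideal.map_isPrime_of_surjective Ideal.Quotient.mk_surjective (by rwa [Ideal.mk_ker])
      have h2 := hs'min.2 ⟨hQ', by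
        rw [Ideal.span_le]
        intro y hy
        have hy' : y ∈ s'.toList := by simpa using hy
        rw [← hl'] at hy'
        obtain ⟨a, ha, rfl⟩ := List.mem_map.1 hy'
        exact Ideal.mem_map_of_mem _ (hr a (List.mem_append_right _ ha))⟩
        (IsLocalRing.le_maximalIdeal hQ'.ne_top)
      intro a ha
      have h3 := h2 ((mk_mem_max J a).2 ha)
      rw [← Ideal.mem_comap, Ideal.comap_map_of_surjective _ Ideal.Quotient.mk_surjective] at h3
      have : Ideal.comap (Ideal.Quotient.mk J) ⊥ = J := by
        rw [← RingHom.ker_eq_comap_bot, Ideal.mk_ker]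
      rw [this, sup_eq_left.2 hJQ] at h3
      exact h3
  rw [isWeaklyRegular_append_iff] at hreg
  have e : (Ideal.ofList s.toList • ⊤ : Submodule S S) = J := by
    rw [hof, smul_eq_mul, Ideal.mul_top]
  have hreg2 := ((Submodule.quotEquivOfEq _ _ e).isWeaklyRegular_congr l').1 hreg.2
  have hass : P ∈ associatedPrimes S (S ⧸ J) := by
    apply Module.associatedPrimes.minimalPrimes_annihilator_subset_associatedPrimes
    rwa [Ideal.annihilator_quotient]
  have h4 := ass_dim l'.length (S ⧸ J) P hass ⟨l', rfl, hl'm, hreg2⟩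
  have h5 := ringKrullDim_le_ringKrullDim_quotient_add_card s (by
    rw [IsLocalRing.ringJacobson_eq_maximalIdeal]
    intro a ha
    apply hJm; rw [← hspan]; exact Ideal.subset_span ha)
  rw [hspan, hdimJ, hdim, hcard] at h5
  rw [hl'len] at h4
  refine h5.trans ?_
  exact add_le_add h4 le_rfl

end DimQuot


section Assembly

set_option linter.unusedSectionVars false

open RingTheory.Sequence
open scoped Pointwise

lemma exists_height_eq {S : Type u} [CommRing S] (I : Ideal S) (h : ℕ)
    (hh : idealHeight S I = (h : ℕ∞)) :
    ∃ p : PrimeSpectrum S, I ≤ p.asIdeal ∧ Order.height p = (h : ℕ∞) := by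
  by_contra hc
  push Not at hc
  have hle : ∀ p : PrimeSpectrum S, I ≤ p.asIdeal → (h : ℕ∞) ≤ Order.height p := by
    intro p hp
    rw [← hh]
    exact iInf₂_le p hp
  have : ((h + 1 : ℕ) : ℕ∞) ≤ idealHeight S I := by
    unfold idealHeight
    refine le_iInf₂ fun p hp => ?_
    have h1 : (h : ℕ∞) < Order.height p := lt_of_le_of_ne (hle p hp) (hc p hp).symm
    exact_mod_cast Order.add_one_le_of_lt h1
  rw [hh] at this
  have := Nat.cast_le.mp this
  omega

lemma le_dim_quot {S : Type u} [CommRing S] [IsLocalRing S] [IsNoetherianRing S]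
    (hreg : IsRegularLocal S) {g : ℕ} (I : Fin g → Ideal S) (h : ℕ)
    (hht : ∀ i, idealHeight S (I i) = (h : ℕ∞))
    (d : ℕ) (hd : ringKrullDim (S ⧸ (⨅ i, I i)) = ((d : ℕ∞) : WithBot ℕ∞)) (i : Fin g) :
    (d : WithBot ℕ∞) ≤ ringKrullDim (S ⧸ I i) := by
  obtain ⟨s, hs, hc⟩ := hreg
  have hdep := (reg_local s.card S s hs le_rfl (le_of_eq hc)).2
  have h1 := dim_add_le (⨅ i, I i) h (by
    intro p hp
    obtain ⟨j, -, hj⟩ : ∃ j ∈ (Finset.univ : Finset (Fin g)), I j ≤ p.asIdeal := by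
      rw [← Ideal.IsPrime.inf_le' p.2]
      rwa [Finset.inf_univ_eq_iInf]
    rw [← hht j]
    exact iInf₂_le p hj)
  obtain ⟨p, hp, hph⟩ := exists_height_eq (I i) h (hht i)
  have h2 := dim_quot_ge s.card hdep hc.symm p.asIdeal h (by
    rw [← hph, PrimeSpectrum.height_eq_orderHeight])
  rw [hd, ← hc] at h1
  have h3 : (d : WithBot ℕ∞) ≤ ringKrullDim (S ⧸ p.asIdeal) := by
    apply dim_cancel d h
    refine le_trans ?_ (h1.trans h2)
    push_cast
    exact le_rfl
  exact h3.trans (ringKrullDim_le_of_surjective (Ideal.Quotient.factor hp)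
    (Ideal.Quotient.factor_surjective hp))

lemma cm_hasDepth {S : Type u} [CommRing S] [IsLocalRing S] [IsNoetherianRing S] (I : Ideal S)
    [IsLocalRing (S ⧸ I)] (hCM : IsCMRing (S ⧸ I)) (d : ℕ)
    (hd : (d : WithBot ℕ∞) ≤ ringKrullDim (S ⧸ I)) : HasDepth (A := S) (S ⧸ I) d := by
  rcases Nat.eq_zero_or_pos d with rfl | hpos
  · exact ⟨[], rfl, by simp, IsWeaklyRegular.nil _ _⟩
  unfold IsCMRing at hCM
  rw [← hCM] at hd
  have hd' : (d : ℕ∞) ≤ mdepth (S ⧸ I) (S ⧸ I) := by exact_mod_cast hd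
  by_contra hc
  have : mdepth (S ⧸ I) (S ⧸ I) ≤ ((d - 1 : ℕ) : ℕ∞) := by
    apply sSup_le
    rintro _ ⟨rs, rfl, h1, h2⟩
    by_contra hlt
    push Not at hlt
    have hlt := Nat.cast_lt.mp hlt
    exact hc ((hasDepth_quot I rs h1 h2.toIsWeaklyRegular).mono (by omega))
  have := Nat.cast_le.mp (hd'.trans this)
  omega

lemma ofList_reverse' {A : Type*} [CommRing A] (l : List A) :
    Ideal.ofList l.reverse = Ideal.ofList l := by
  simp [Ideal.ofList]

lemma QReg_of_isWeaklyRegular {A M : Type*} [CommRing A] [AddCommGroup M] [Module A M]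
    (l : List A) (h : IsWeaklyRegular M l) : QReg M l.reverse := by
  induction l using List.reverseRecOn with
  | nil => simp [QReg]
  | append_singleton l x ih =>
    rw [isWeaklyRegular_append_iff] at h
    rw [List.reverse_append]
    refine ⟨ih h.1, fun w hw => ?_⟩
    have h2 := (isWeaklyRegular_singleton_iff _ _).mp h.2
    rw [List.append_eq, List.nil_append, ofList_reverse'] at hw ⊢
    rw [← Submodule.Quotient.mk_eq_zero] at hw ⊢
    rw [Submodule.Quotient.mk_smul] at hw
    apply h2
    simpa using hw

lemma mem_smul_top_pi {A : Type*} [CommRing A] {ι : Type*} [Fintype ι] [DecidableEq ι]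
    (M : ι → Type*) [∀ i, AddCommGroup (M i)] [∀ i, Module A (M i)] (J : Ideal A)
    (w : (i : ι) → M i) :
    w ∈ (J • ⊤ : Submodule A ((i : ι) → M i)) ↔ ∀ i, w i ∈ (J • ⊤ : Submodule A (M i)) := by
  constructor
  · intro hw i
    have : w i ∈ (J • ⊤ : Submodule A ((i : ι) → M i)).map (LinearMap.proj (R := A) i) :=
      ⟨w, hw, rfl⟩
    rw [Submodule.map_smul''] at this
    exact smul_top_of_mem this
  · intro hw
    have : w = ∑ i, LinearMap.single A M i (w i) := by
      simp [LinearMap.single_apply, Finset.univ_sum_single]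
    rw [this]
    refine Submodule.sum_mem _ fun i _ => ?_
    have : LinearMap.single A M i (w i) ∈
        (J • ⊤ : Submodule A (M i)).map (LinearMap.single A M i) := ⟨w i, hw i, rfl⟩
    rw [Submodule.map_smul''] at this
    exact smul_top_of_mem this

lemma QReg_pi {A : Type*} [CommRing A] {ι : Type*} [Fintype ι]
    (M : ι → Type*) [∀ i, AddCommGroup (M i)] [∀ i, Module A (M i)] (l : List A)
    (h : ∀ i, QReg (M i) l) : QReg ((i : ι) → M i) l := by
  classical
  induction l with
  | nil => trivial
  | cons x l ih =>
    refine ⟨ih fun i => (h i).1, fun w hw => ?_⟩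
    rw [mem_smul_top_pi] at hw ⊢
    exact fun i => (h i).2 _ (hw i)

lemma mlen_eq {A : Type u} [CommRing A] (M : Type u) [AddCommGroup M] [Module A M] (k : ℕ)
    (h : mlen A M = ((k : ℕ∞) : WithBot ℕ∞)) : Module.length A M = k := by
  unfold mlen at h
  rw [← Module.coe_length] at h
  exact_mod_cast h

lemma max_le_of_par {S : Type u} [CommRing S] [IsLocalRing S] [IsNoetherianRing S]
    (I : Ideal S) (K : Ideal (S ⧸ I))
    (hfin : mlen (S ⧸ I) ((S ⧸ I) ⧸ (K • (⊤ : Submodule (S ⧸ I) (S ⧸ I)))) < ⊤)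
    (P : Ideal S) (hP : P.IsPrime) (hI : I ≤ P) (hK : K ≤ P.map (Ideal.Quotient.mk I)) :
    maximalIdeal S ≤ P := by
  have hKK : (K • (⊤ : Submodule (S ⧸ I) (S ⧸ I))) = K := by
    simp
  rw [hKK] at hfin
  have h1 : Module.length (S ⧸ I) ((S ⧸ I) ⧸ K) ≠ ⊤ := by
    unfold mlen at hfin
    rw [← Module.coe_length] at hfin
    intro h
    rw [h] at hfin
    exact lt_irrefl _ hfin
  rw [Module.length_ne_top_iff, isFiniteLength_iff_isNoetherian_isArtinian] at h1
  have hA : IsArtinianRing ((S ⧸ I) ⧸ K) := isArtinian_of_tower (S ⧸ I) h1.2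
  let f : S →+* (S ⧸ I) ⧸ K := (Ideal.Quotient.mk K).comp (Ideal.Quotient.mk I)
  have hf : Function.Surjective f :=
    (Ideal.Quotient.mk_surjective).comp Ideal.Quotient.mk_surjective
  have hker : RingHom.ker f ≤ P := by
    intro x hx
    have hx : Ideal.Quotient.mk K (Ideal.Quotient.mk I x) = 0 := hx
    rw [Ideal.Quotient.eq_zero_iff_mem] at hx
    have h2 : x ∈ (P.map (Ideal.Quotient.mk I)).comap (Ideal.Quotient.mk I) := hK hx
    rwa [Ideal.comap_map_of_surjective _ Ideal.Quotient.mk_surjective, ← RingHom.ker_eq_comap_bot,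
      Ideal.mk_ker, sup_eq_left.mpr hI] at h2
  have hp : (P.map f).IsPrime := Ideal.map_isPrime_of_surjective hf hker
  have hm : (P.map f).IsMaximal := Ideal.IsPrime.isMaximal' hp
  have h3 : P = (P.map f).comap f := by
    rw [Ideal.comap_map_of_surjective _ hf, ← RingHom.ker_eq_comap_bot, sup_eq_left.mpr hker]
  have : P.IsMaximal := by
    rw [h3]; exact Ideal.comap_isMaximal_of_surjective f hf
  rw [IsLocalRing.eq_maximalIdeal this]

end Assembly


section Final

set_option linter.unusedSectionVars false

open RingTheory.Sequence
open scoped Pointwise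

/-- the diagonal map -/
noncomputable abbrev diagMap {S : Type u} [CommRing S] {g : ℕ} (I : Fin g → Ideal S) :
    S →ₗ[S] ((i : Fin g) → S ⧸ I i) :=
  LinearMap.pi fun i => Algebra.linearMap S (S ⧸ I i)

lemma diagMap_eq_zero {S : Type u} [CommRing S] {g : ℕ} (I : Fin g → Ideal S) (x : S) :
    diagMap I x = 0 ↔ x ∈ ⨅ i, I i := by
  rw [funext_iff, Submodule.mem_iInf]
  refine forall_congr' fun i => ?_
  exact Ideal.Quotient.eq_zero_iff_mem

lemma diag_ann_ne_top {S : Type u} [CommRing S] [IsLocalRing S]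
    {g : ℕ} (hg : 2 ≤ g) (I : Fin g → Ideal S)
    (hprim : ∀ i j, i ≠ j → (I i + I j).radical = maximalIdeal S) :
    Nontrivial ((((i : Fin g) → S ⧸ I i)) ⧸ LinearMap.range (diagMap I)) := by
  classical
  by_contra hc
  rw [not_nontrivial_iff_subsingleton, Submodule.Quotient.subsingleton_iff] at hc
  let i0 : Fin g := ⟨0, by omega⟩
  let i1 : Fin g := ⟨1, by omega⟩
  have hne : i0 ≠ i1 := by simp [i0, i1]
  have hmem : (Pi.single i0 1 : (i : Fin g) → S ⧸ I i) ∈ LinearMap.range (diagMap I) := by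
    rw [hc]; trivial
  obtain ⟨x, hx⟩ := hmem
  have h0 := congrFun hx i0
  have h1 := congrFun hx i1
  rw [Pi.single_eq_same] at h0
  rw [Pi.single_eq_of_ne hne.symm] at h1
  have h0 : Ideal.Quotient.mk (I i0) x = Ideal.Quotient.mk (I i0) 1 := h0
  have h1 : Ideal.Quotient.mk (I i1) x = 0 := h1
  rw [Ideal.Quotient.eq] at h0
  rw [Ideal.Quotient.eq_zero_iff_mem] at h1
  have h2 : (1 : S) ∈ (I i0 + I i1) := by
    rw [Submodule.add_eq_sup, Submodule.mem_sup]
    exact ⟨-(x - 1), neg_mem h0, x, h1, by ring⟩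
  have h3 : (1 : S) ∈ maximalIdeal S := by
    rw [← hprim i0 i1 hne]
    exact Ideal.le_radical h2
  exact (Ideal.ne_top_iff_one _).mp (maximalIdeal.isMaximal S).ne_top h3

lemma diag_len {S : Type u} [CommRing S] {g : ℕ} (I : Fin g → Ideal S) (J : Ideal S) (n : ℕ)
    (K : Ideal (S ⧸ (⨅ i, I i))) (hK : K = J.map (Ideal.Quotient.mk (⨅ i, I i))) :
    rlen (LinearMap.range (diagMap I)) (J ^ n • LinearMap.range (diagMap I)) =
      Module.length (S ⧸ (⨅ i, I i))
        ((S ⧸ (⨅ i, I i)) ⧸ (K ^ n • (⊤ : Submodule (S ⧸ (⨅ i, I i)) (S ⧸ (⨅ i, I i))))) := by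
  have hmap : J ^ n • LinearMap.range (diagMap I) = Submodule.map (diagMap I) (J ^ n) := by
    rw [LinearMap.range_eq_map, ← Submodule.map_smul'']
    simp
  have e1 : rlen (LinearMap.range (diagMap I)) (J ^ n • LinearMap.range (diagMap I)) =
      rlen (⊤ : Submodule S S) (J ^ n ⊔ ⨅ i, I i : Ideal S) := by
    apply rlen_eq (diagMap I)
    · intro w _; exact ⟨w, rfl⟩
    · intro w _
      rw [hmap]
      have hc : Submodule.comap (diagMap I) (Submodule.map (diagMap I) (J ^ n)) = J ^ n ⊔ ⨅ i, I i := by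
        rw [Submodule.comap_map_eq]
        congr 1
        ext x
        exact diagMap_eq_zero I x
      rw [← hc]
      rfl
    · rintro z ⟨w, rfl⟩
      exact ⟨w, trivial, by simp⟩
  rw [e1, rlen_top]
  rw [← Module.length_eq_of_surjective (R := S ⧸ (⨅ i, I i)) (S := S) Ideal.Quotient.mk_surjective]
  have hKn : (K ^ n • (⊤ : Submodule (S ⧸ (⨅ i, I i)) (S ⧸ (⨅ i, I i)))) =
     (J ^ n).map (Ideal.Quotient.mk (⨅ i, I i)) := by
    rw [hK, Ideal.map_pow]; simp
  rw [hKn, sup_comm]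
  exact (DoubleQuot.quotQuotEquivQuotSupₐ S (⨅ i, I i) (J ^ n)).toLinearEquiv.length_eq.symm

end Final


/-- **Mandal–Verma.** With `R = S/(I₁ ∩ ⋯ ∩ I_g)` as above, `J = (a₁,…,a_d)` inducing a system
of parameters of `R`, `K = JR` and `L = [⊕ᵢ S/Iᵢ]/R`: if `J ⊆ ann L`, then
`eᵢ(K) = (-1)ⁱ λ(L)` for `1 ≤ i ≤ d-1`, `e_d(K) = 0`, and in particular `e₁(K) = -λ(L) < 0`. -/
theorem stmt_9 (S : Type u) [CommRing S] [IsLocalRing S] [IsNoetherianRing S]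
    (hreg : IsRegularLocal S)
    (g : ℕ) (hg : 2 ≤ g) (I : Fin g → Ideal S) (h : ℕ)
    [∀ i, IsLocalRing (S ⧸ I i)] (hCM : ∀ i, IsCMRing (S ⧸ I i))
    (hht : ∀ i, idealHeight S (I i) = (h : ℕ∞))
    (hprim : ∀ i j, i ≠ j → (I i + I j).radical = maximalIdeal S)
    [IsLocalRing (S ⧸ (⨅ i, I i))]
    (d : ℕ) (hd2 : 2 ≤ d) (hd : ringKrullDim (S ⧸ (⨅ i, I i)) = ((d : ℕ∞) : WithBot ℕ∞))
    (a : Fin d → S)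
    (hpar : IsParameterIdeal (S ⧸ (⨅ i, I i))
      (Ideal.span (Set.range fun i => Ideal.Quotient.mk (⨅ i, I i) (a i))) d
      (S ⧸ (⨅ i, I i)))
    (lL : ℕ)
    (hlen : mlen S ((((i : Fin g) → S ⧸ I i)) ⧸
        LinearMap.range (LinearMap.pi fun i => Algebra.linearMap S (S ⧸ I i)))
      = ((lL : ℕ∞) : WithBot ℕ∞))
    (hann : Ideal.span (Set.range a) ≤ Module.annihilator S
      ((((i : Fin g) → S ⧸ I i)) ⧸
        LinearMap.range (LinearMap.pi fun i => Algebra.linearMap S (S ⧸ I i))))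
    (e : ℕ → ℤ)
    (he : HasHilbCoeffs (S ⧸ (⨅ i, I i))
      (Ideal.span (Set.range fun i => Ideal.Quotient.mk (⨅ i, I i) (a i)))
      (S ⧸ (⨅ i, I i)) d e) :
    (∀ i, 1 ≤ i → i ≤ d - 1 → e i = (-1 : ℤ) ^ i * (lL : ℤ)) ∧ e d = 0 ∧
      e 1 = -(lL : ℤ) ∧ e 1 < 0 := by
  classical
  have hJspan : Ideal.ofList (List.ofFn a).reverse = Ideal.span (Set.range a) := by
    rw [ofList_reverse']
    simp only [Ideal.ofList, List.mem_ofFn]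
    rfl
  have hnt := diag_ann_ne_top hg I hprim
  have hL := mlen_eq _ _ hlen
  have hLpos : 1 ≤ lL := by
    by_contra hc
    have h0 : lL = 0 := by omega
    rw [h0, Nat.cast_zero, Module.length_eq_zero_iff] at hL
    exact not_subsingleton _ hL
  -- the parameters lie in the maximal ideal
  have ham : ∀ j, a j ∈ maximalIdeal S := by
    intro j
    have h1 : Ideal.span (Set.range a) ≤ maximalIdeal S := by
      refine le_trans hann (IsLocalRing.le_maximalIdeal ?_)
      intro htop
      rw [Module.annihilator_eq_top_iff] at htop
      exact not_subsingleton _ htop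
    exact h1 (Ideal.subset_span ⟨j, rfl⟩)
  have hKmap : Ideal.span (Set.range fun i => Ideal.Quotient.mk (⨅ i, I i) (a i)) =
      (Ideal.span (Set.range a)).map (Ideal.Quotient.mk (⨅ i, I i)) := by
    rw [Ideal.map_span, ← Set.range_comp]
    rfl
  -- each component is regular
  have hW : ∀ i, RingTheory.Sequence.IsWeaklyRegular (S ⧸ I i) (List.ofFn a) := by
    intro i
    haveI : Nontrivial (S ⧸ I i) := inferInstance
    apply sop_regular (List.ofFn a) (S ⧸ I i)
    · rw [List.length_ofFn]
      exact cm_hasDepth (I i) (hCM i) d (le_dim_quot hreg I h hht d hd i)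
    · intro r hr
      rw [List.mem_ofFn] at hr
      obtain ⟨j, rfl⟩ := hr
      exact ham j
    · intro P hP hI hr
      rw [Ideal.annihilator_quotient] at hI
      refine max_le_of_par (⨅ i, I i) _ hpar.2 P hP ((iInf_le I i).trans hI) ?_
      rw [hKmap]
      apply Ideal.map_mono
      rw [Ideal.span_le]
      rintro _ ⟨j, rfl⟩
      exact hr _ (by rw [List.mem_ofFn]; exact ⟨j, rfl⟩)
  have hQ : QReg ((i : Fin g) → S ⧸ I i) (List.ofFn a).reverse :=
    QReg_pi _ _ fun i => QReg_of_isWeaklyRegular _ (hW i)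
  have hN : Ideal.ofList (List.ofFn a).reverse • (⊤ : Submodule S ((i : Fin g) → S ⧸ I i)) ≤
      LinearMap.range (diagMap I) := by
    rw [hJspan, Submodule.smul_le]
    intro r hr w _
    have h1 := Module.mem_annihilator.mp (hann hr) (Submodule.Quotient.mk w)
    rw [← Submodule.Quotient.mk_smul, Submodule.Quotient.mk_eq_zero] at h1
    exact h1
  obtain ⟨ℓ, hℓ, hev⟩ := he
  have key : ∀ n, (lL : ℕ∞) + (ℓ (n + 1) : ℕ∞) =
      (Nat.multichoose (d + 1) n : ℕ∞) * rlen ⊤ (Ideal.ofList (List.ofFn a).reverse •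
        (⊤ : Submodule S ((i : Fin g) → S ⧸ I i))) +
      (Nat.multichoose d (n + 1) : ℕ∞) * (lL : ℕ∞) := by
    intro n
    have h1 := rlen_key _ hQ n _ hN
    rw [rlen_top (LinearMap.range (diagMap I)), hL] at h1
    rw [hJspan, diag_len I _ (n + 1) _ hKmap, mlen_eq _ _ (hℓ (n + 1)), List.length_reverse,
      List.length_ofFn] at h1
    rw [hJspan]
    exact h1
  obtain ⟨l0, hl0⟩ : ∃ l0 : ℕ, rlen ⊤ (Ideal.ofList (List.ofFn a).reverse •
        (⊤ : Submodule S ((i : Fin g) → S ⧸ I i))) = l0 := by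
    have h0 := key 0
    have hne : rlen ⊤ (Ideal.ofList (List.ofFn a).reverse •
        (⊤ : Submodule S ((i : Fin g) → S ⧸ I i))) ≠ ⊤ := by
      intro htop
      rw [htop, Nat.multichoose_zero_right, Nat.cast_one, one_mul, top_add] at h0
      exact absurd h0 (by exact_mod_cast ENat.coe_ne_top _)
    exact ⟨_, (ENat.coe_toNat hne).symm⟩
  rw [hl0] at key
  obtain ⟨N, hN'⟩ := eventually_atTop.mp hev
  have hfin := coeffs_of_eq d hd2 e (l0 : ℤ) (lL : ℤ) N (by
    intro n hn
    have h1 : lL + ℓ (n + 1) = Nat.multichoose (d + 1) n * l0 + Nat.multichoose d (n + 1) * lL := by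
      exact_mod_cast key n
    have h2 := hN' (n + 1) (by omega)
    unfold hsPoly at h2
    rw [← h2]
    rw [add_comm]
    exact_mod_cast h1)
  have he1 : e 1 = -(lL : ℤ) := by
    rw [hfin.1 1 le_rfl (by omega)]; ring
  exact ⟨hfin.1, hfin.2, he1, by rw [he1]; omega⟩
end
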